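/- arXiv:1007.3572 — 3 statements merged into one kernel-verified Lean document; each statement's English description precedes it below -/
import Mathlib

section
/- Let (G,∘) be a finite group of odd order n with n > 50. Then δ(G,∘) = 6n − 18; that is, the minimum Hamming distance between ∘ and any other group operation on G equals 6n − 18. -/
/-- `star` is a group operation on `G`. -/
def IsGroupOp {G : Type*} (star : G → G → G) : Prop :=
  ∃ (e : G) (inv : G → G),
    (∀ a b c : G, star (star a b) c = star a (star b c)) ∧
    (∀ a : G, star e a = a) ∧ (∀ a : G, star a e = a) ∧
    (∀ a : G, star (inv a) a = e) ∧ (∀ a : G, star a (inv a) = e)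

/-- The Hamming distance between two binary operations on a finite set. -/
def opDist {G : Type*} [Fintype G] [DecidableEq G] (f g : G → G → G) : ℕ :=
  (Finset.univ.filter fun p : G × G => f p.1 p.2 ≠ g p.1 p.2).card

/-- `δ(G,∘)`: the minimum Hamming distance between the group operation of `G`
and any other group operation on `G`. -/
noncomputable def groupDelta (G : Type*) [Group G] [Fintype G] [DecidableEq G] : ℕ :=
  sInf {d : ℕ | ∃ star : G → G → G, IsGroupOp star ∧
    star ≠ (fun a b => a * b) ∧ d = opDist (fun a b : G => a * b) star}

/-!
Every group operation on `G` is the pullback of the multiplication of a group `H` along a bijection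
`f : G ≃ H`, and its distance to the multiplication of `G` is the number of pairs at which `f` fails
to be multiplicative. If these are fewer than a sixth of all pairs, then averaging over `z` shows
that for each `x` some value `f (x * z) * (f z)⁻¹` agrees with `f (x * y) * (f y)⁻¹` for more than
two thirds of all `y`. These majority values define an isomorphism that differs from `f` at fewer
than a quarter of the points, and composing `f` with its inverse reduces the problem to a
permutation of `G` with small support. If `G` has order `n`, a permutation moving `k` points has at
least `3 * k * (n - 2 * k)` defects, which is enough for `k ≥ 3`. The defects of a transposition are
counted row by row, and `swap u u⁻¹` has the fewest.
-/

open Finset Equiv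

section Transport

/-- The group operation on `α` obtained by transporting the multiplication of `H` along a
bijection `f`. -/
def pullbackMul {α H : Type*} [Mul H] (f : α ≃ H) (x y : α) : α :=
  f.symm (f x * f y)

theorem isGroupOp_pullbackMul {α H : Type*} [Group H] (f : α ≃ H) :
    IsGroupOp (pullbackMul f) :=
  ⟨f.symm 1, fun a => f.symm (f a)⁻¹, by simp [pullbackMul, mul_assoc], by simp [pullbackMul],
    by simp [pullbackMul], by simp [pullbackMul], by simp [pullbackMul]⟩

theorem IsGroupOp.exists_eq_pullbackMul.{u} {α : Type u} {star : α → α → α}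
    (h : IsGroupOp star) : ∃ (H : Type u) (_ : Group H) (f : α ≃ H), star = pullbackMul f := by
  obtain ⟨e, inv, hassoc, hone_mul, hmul_one, hinv_mul, -⟩ := h
  let H : Group α :=
    { mul := star
      one := e
      inv := inv
      mul_assoc := hassoc
      one_mul := hone_mul
      mul_one := hmul_one
      inv_mul_cancel := hinv_mul }
  exact ⟨α, H, Equiv.refl α, rfl⟩

end Transport

section Defect

variable {G H : Type*} [Mul G] [Fintype G] [Mul H] [DecidableEq H]

/-- The pairs at which `f` fails to be multiplicative. -/
def mulDefect (f : G → H) : Finset (G × G) :=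
  {p | f (p.1 * p.2) ≠ f p.1 * f p.2}

/-- The points where `f` fails to turn left translation by `x` into left translation by `h`. -/
def translationDefect (f : G → H) (x : G) (h : H) : Finset G :=
  {y | f (x * y) ≠ h * f y}

/-- The row of `mulDefect f` at `x`: the elements `y` such that `(x, y)` lies in `mulDefect f`. -/
abbrev rowDefect (f : G → H) (x : G) : Finset G :=
  translationDefect f x (f x)

theorem mem_mulDefect {f : G → H} {p : G × G} :
    p ∈ mulDefect f ↔ f (p.1 * p.2) ≠ f p.1 * f p.2 := by
  simp [mulDefect]

theorem mem_translationDefect {f : G → H} {x : G} {h : H} {y : G} :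
    y ∈ translationDefect f x h ↔ f (x * y) ≠ h * f y := by
  simp [translationDefect]

theorem card_mulDefect (f : G → H) : #(mulDefect f) = ∑ x, #(rowDefect f x) := by
  simp only [mulDefect, translationDefect, card_filter, ← Fintype.sum_prod_type']

theorem card_sub_card_le_card_translationDefect {f : G → H} {x : G} {h : H} {S : Finset G}
    (hS : ∀ y ∉ S, f (x * y) ≠ h * f y) : Fintype.card G - #S ≤ #(translationDefect f x h) := by
  classical
  rw [← card_compl]
  exact card_le_card fun y hy => mem_translationDefect.2 (hS y (mem_compl.1 hy))

theorem card_translationDefect_le_card_sub_card {f : G → H} {x : G} {h : H} {S : Finset G}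
    (hS : ∀ y ∈ S, f (x * y) = h * f y) : #(translationDefect f x h) ≤ Fintype.card G - #S := by
  classical
  rw [← card_compl]
  exact card_le_card fun y hy => mem_compl.2 fun hyS => mem_translationDefect.1 hy (hS y hyS)

theorem mulDefect_mulEquiv_comp {K : Type*} [Mul K] [DecidableEq K] (e : H ≃* K) (f : G → H) :
    mulDefect (e ∘ f) = mulDefect f := by
  ext p
  simp only [mem_mulDefect, Function.comp_apply, ← map_mul, e.injective.ne_iff]

theorem opDist_pullbackMul [DecidableEq G] (f : G ≃ H) :
    opDist (fun a b : G => a * b) (pullbackMul f) = #(mulDefect f) :=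
  congrArg card <| filter_congr fun _ _ => not_congr (eq_symm_apply f)

theorem mulDefect_nonempty_iff (f : G ≃ H) :
    (mulDefect f).Nonempty ↔ pullbackMul f ≠ fun a b => a * b := by
  simp only [Finset.Nonempty, mem_mulDefect, Prod.exists, ne_eq, funext_iff, not_forall,
    pullbackMul, symm_apply_eq, eq_comm (b := f (_ * _))]

end Defect

section HammingDist

theorem card_le_card_notMem_and_apply_notMem_add {α : Type*} [Fintype α] [DecidableEq α]
    (M : Finset α) (s : Perm α) :
    Fintype.card α ≤ #{y | y ∉ M ∧ s y ∉ M} + 2 * #M := by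
  have hcover : (univ : Finset α) ⊆
      ({y | y ∉ M ∧ s y ∉ M} : Finset α) ∪ (M ∪ M.map s.symm.toEmbedding) := by
    intro y _
    simp only [mem_union, mem_filter_univ, mem_map_equiv, symm_symm]
    tauto
  calc Fintype.card α ≤ #(({y | y ∉ M ∧ s y ∉ M} : Finset α) ∪ (M ∪ M.map s.symm.toEmbedding)) :=
        card_le_card hcover
    _ ≤ #{y | y ∉ M ∧ s y ∉ M} + (#M + #M) := by
        grw [card_union_le, card_union_le, card_map]
    _ = #{y | y ∉ M ∧ s y ∉ M} + 2 * #M := by rw [two_mul]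

theorem injective_of_two_mul_hammingDist_lt {G H : Type*} [Group G] [Fintype G]
    [MulOneClass H] [DecidableEq H] {f : G → H} (hf : f.Injective) (g : G →* H)
    (hfg : 2 * hammingDist f g < Fintype.card G) : Function.Injective g := by
  classical
  refine (injective_iff_map_eq_one g).2 fun x hx => ?_
  obtain ⟨y, hy⟩ : ({y | y ∉ ({z | f z ≠ g z} : Finset G) ∧
      Equiv.mulLeft x y ∉ ({z | f z ≠ g z} : Finset G)} : Finset G).Nonempty := by
    have := card_le_card_notMem_and_apply_notMem_add {z | f z ≠ g z} (Equiv.mulLeft x)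
    rw [← card_pos]
    simp only [hammingDist] at hfg
    omega
  simp only [mem_filter_univ, not_not, Equiv.coe_mulLeft] at hy
  have hxy : f (x * y) = f y := by rw [hy.1, hy.2, map_mul, hx, one_mul]
  exact mul_eq_right.1 (hf hxy)

end HammingDist

section RightCancel

variable {G H : Type*} [Mul G] [Fintype G] [Mul H] [IsRightCancelMul H] [DecidableEq H]

theorem card_le_card_translationDefect_add (f : G → H) (x : G) {h k : H} (hhk : h ≠ k) :
    Fintype.card G ≤ #(translationDefect f x h) + #(translationDefect f x k) := by
  classical
  refine le_trans (card_le_card fun y _ => ?_) (card_union_le _ _)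
  simp only [mem_union, mem_translationDefect]
  by_contra! hmul
  exact hhk (mul_right_cancel (hmul.1.symm.trans hmul.2))

theorem four_mul_hammingDist_lt {f g : G → H}
    (hf : 6 * #(mulDefect f) < Fintype.card G ^ 2)
    (hg : ∀ x, 3 * #(translationDefect f x (g x)) < Fintype.card G) :
    4 * hammingDist f g < Fintype.card G := by
  have hrow : ∀ x ∈ ({x | f x ≠ g x} : Finset G),
      2 * Fintype.card G ≤ 3 * #(rowDefect f x) := by
    intro x hx
    have : Fintype.card G ≤ #(rowDefect f x) + #(translationDefect f x (g x)) :=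
      card_le_card_translationDefect_add f x (mem_filter.1 hx).2
    have := hg x
    omega
  have hsum : hammingDist f g * (2 * Fintype.card G) ≤ 3 * #(mulDefect f) :=
    calc hammingDist f g * (2 * Fintype.card G)
        ≤ ∑ x with f x ≠ g x, 3 * #(rowDefect f x) := card_nsmul_le_sum _ _ _ hrow
      _ ≤ ∑ x, 3 * #(rowDefect f x) := sum_le_sum_of_subset (subset_univ _)
      _ = 3 * #(mulDefect f) := by rw [card_mulDefect, mul_sum]
  nlinarith

end RightCancel

section Stability

variable {G H : Type*} [Group G] [Fintype G] [Group H] [DecidableEq H]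

theorem card_translationDefect_le (f : G → H) (x z : G) :
    #(translationDefect f x (f (x * z) * (f z)⁻¹)) ≤ #(rowDefect f (x * z)) + #(rowDefect f z) := by
  classical
  have hsub : (translationDefect f x (f (x * z) * (f z)⁻¹)).image (z⁻¹ * ·) ⊆
      rowDefect f (x * z) ∪ rowDefect f z := by
    intro w hw
    obtain ⟨y, hy, rfl⟩ := mem_image.1 hw
    rw [mem_translationDefect] at hy
    simp only [mem_union, mem_translationDefect]
    by_contra! hmul
    obtain ⟨hxz, hz⟩ := hmul
    rw [mul_inv_cancel_left] at hz
    rw [mul_assoc, mul_inv_cancel_left] at hxz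
    exact hy (by rw [hxz, hz]; group)
  rw [← card_image_of_injective _ (mul_right_injective z⁻¹)]
  exact (card_le_card hsub).trans (card_union_le _ _)

theorem exists_three_mul_card_translationDefect_lt {f : G → H}
    (hf : 6 * #(mulDefect f) < Fintype.card G ^ 2) (x : G) :
    ∃ h, 3 * #(translationDefect f x h) < Fintype.card G := by
  by_contra! hlarge
  have hrows : ∑ z, (#(rowDefect f (x * z)) + #(rowDefect f z)) = 2 * #(mulDefect f) := by
    rw [sum_add_distrib, card_mulDefect, two_mul]
    exact congrArg (· + _) (Equiv.sum_comp (Equiv.mulLeft x) fun z => #(rowDefect f z))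
  have hsum : Fintype.card G * Fintype.card G ≤ 3 * (2 * #(mulDefect f)) :=
    calc Fintype.card G * Fintype.card G = ∑ _z : G, Fintype.card G := by simp
      _ ≤ ∑ z, 3 * (#(rowDefect f (x * z)) + #(rowDefect f z)) :=
        sum_le_sum fun z _ => (hlarge _).trans
          (Nat.mul_le_mul_left 3 (card_translationDefect_le f x z))
      _ = 3 * (2 * #(mulDefect f)) := by rw [← mul_sum, hrows]
  linarith [sq (Fintype.card G)]

theorem mul_eq_of_card_translationDefect_lt (f : G → H) {x y : G} {h k l : H}
    (hcard : #(translationDefect f x h) + #(translationDefect f y k) +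
      #(translationDefect f (x * y) l) < Fintype.card G) : l = h * k := by
  classical
  let E := (translationDefect f x h).image (y⁻¹ * ·) ∪ translationDefect f y k ∪
    translationDefect f (x * y) l
  have hE : #E < #(univ : Finset G) := by
    rw [card_univ]
    refine lt_of_le_of_lt ((card_union_le _ _).trans ?_) hcard
    gcongr
    exact (card_union_le _ _).trans (Nat.add_le_add_right card_image_le _)
  obtain ⟨z, -, hz⟩ := exists_mem_notMem_of_card_lt_card hE
  simp only [E, mem_union, not_or, mem_image, not_exists, not_and] at hz
  obtain ⟨⟨hx, hy⟩, hxy⟩ := hz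
  have hx : y * z ∉ translationDefect f x h := fun hmem => hx _ hmem (inv_mul_cancel_left y z)
  simp only [mem_translationDefect, not_not] at hx hy hxy
  rw [mul_assoc, hx, hy, ← mul_assoc] at hxy
  exact (mul_right_cancel hxy).symm

theorem exists_monoidHom_three_mul_card_translationDefect_lt {f : G → H}
    (hf : 6 * #(mulDefect f) < Fintype.card G ^ 2) :
    ∃ g : G →* H, ∀ x, 3 * #(translationDefect f x (g x)) < Fintype.card G := by
  choose g hg using exists_three_mul_card_translationDefect_lt hf
  refine ⟨MonoidHom.mk' g fun x y => mul_eq_of_card_translationDefect_lt f (x := x) (y := y) ?_, hg⟩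
  linarith [hg x, hg y, hg (x * y)]

theorem exists_mulEquiv_four_mul_hammingDist_lt (f : G ≃ H)
    (hf : 6 * #(mulDefect f) < Fintype.card G ^ 2) :
    ∃ e : G ≃* H, 4 * hammingDist f e < Fintype.card G := by
  obtain ⟨g, hg⟩ := exists_monoidHom_three_mul_card_translationDefect_lt hf
  have hdist : 4 * hammingDist f g < Fintype.card G := four_mul_hammingDist_lt hf hg
  have : Finite H := Finite.of_equiv G f
  have hinj := injective_of_two_mul_hammingDist_lt f.injective g (by omega)
  exact ⟨MulEquiv.ofBijective g
    ((Nat.bijective_iff_injective_and_card g).2 ⟨hinj, Nat.card_congr f⟩), hdist⟩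

end Stability

section Support

theorem card_mul_card_sub_le_card_of_injective2 {α β : Type*} [Fintype α] (M : Finset α)
    (s : α → Perm α) {φ : α → α → β} (hφ : φ.Injective2) {T : Finset β}
    (hT : ∀ x ∈ M, ∀ y, y ∉ M → s x y ∉ M → φ x y ∈ T) :
    #M * (Fintype.card α - 2 * #M) ≤ #T := by
  classical
  calc #M * (Fintype.card α - 2 * #M)
      ≤ ∑ x ∈ M, #{y | y ∉ M ∧ s x y ∉ M} := card_nsmul_le_sum _ _ _ fun x _ =>
        Nat.sub_le_iff_le_add.2 (card_le_card_notMem_and_apply_notMem_add M (s x))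
    _ = #(M.sigma fun x => {y | y ∉ M ∧ s x y ∉ M}) := (card_sigma _ _).symm
    _ ≤ #T := card_le_card_of_injOn (fun p => φ p.1 p.2)
        (fun p hp => by
          obtain ⟨hx, hy⟩ := mem_sigma.1 (mem_coe.1 hp)
          exact hT _ hx _ (mem_filter.1 hy).2.1 (mem_filter.1 hy).2.2)
        fun p _ q _ hpq => Sigma.ext (hφ hpq).1 (heq_of_eq (hφ hpq).2)

variable {G : Type*} [Group G] [Fintype G] [DecidableEq G]

-- A pair `(x, y)` is a defect as soon as exactly one of `x`, `y`, `x * y` is moved by `τ`.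
theorem three_mul_card_support_mul_le_card_mulDefect (τ : Perm G) :
    3 * (#τ.support * (Fintype.card G - 2 * #τ.support)) ≤ #(mulDefect τ) := by
  let M := τ.support
  have hfix {x : G} (hx : x ∉ M) : τ x = x := Perm.notMem_support.1 hx
  have hleft : #M * (Fintype.card G - 2 * #M) ≤ #{p ∈ mulDefect τ | p.1 ∈ M ∧ p.2 ∉ M} := by
    refine card_mul_card_sub_le_card_of_injective2 M Equiv.mulLeft (fun _ _ _ _ => Prod.mk.inj)
      fun x hx y hy hxy => mem_filter.2 ⟨mem_mulDefect.2 fun (hmul : τ (x * y) = τ x * τ y) => ?_,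
        hx, hy⟩
    have hx' : x * y = τ x * y := by rwa [show τ (x * y) = x * y from hfix hxy, hfix hy] at hmul
    exact Perm.mem_support.1 hx (mul_right_cancel hx').symm
  have hright : #M * (Fintype.card G - 2 * #M) ≤ #{p ∈ mulDefect τ | p.1 ∉ M ∧ p.2 ∈ M} := by
    refine card_mul_card_sub_le_card_of_injective2 M Equiv.mulRight (φ := fun y x => (x, y))
      (fun _ _ _ _ h => (Prod.mk.inj h).symm)
      fun y hy x hx hxy => mem_filter.2 ⟨mem_mulDefect.2 fun (hmul : τ (x * y) = τ x * τ y) => ?_,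
        hx, hy⟩
    have hy' : x * y = x * τ y := by rwa [show τ (x * y) = x * y from hfix hxy, hfix hx] at hmul
    exact Perm.mem_support.1 hy (mul_left_cancel hy').symm
  have hprod : #M * (Fintype.card G - 2 * #M) ≤ #{p ∈ mulDefect τ | p.1 ∉ M ∧ p.2 ∉ M} := by
    refine card_mul_card_sub_le_card_of_injective2 M
      (fun z => (Equiv.inv G).trans (Equiv.mulRight z))
      (φ := fun z x => (x, x⁻¹ * z)) (fun z z' x x' h => ?_)
      fun z hz x hx hxz => mem_filter.2 ⟨mem_mulDefect.2
        fun (hmul : τ (x * (x⁻¹ * z)) = τ x * τ (x⁻¹ * z)) => ?_, hx, hxz⟩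
    · obtain ⟨rfl, hz⟩ := Prod.mk.inj h
      exact ⟨mul_left_cancel hz, rfl⟩
    · have hz' : τ z = z := by
        rwa [hfix hx, show τ (x⁻¹ * z) = x⁻¹ * z from hfix hxz, mul_inv_cancel_left] at hmul
      exact Perm.mem_support.1 hz hz'
  have hle : #{p ∈ mulDefect τ | p.1 ∈ M ∧ p.2 ∉ M} + #{p ∈ mulDefect τ | p.1 ∉ M ∧ p.2 ∈ M} +
      #{p ∈ mulDefect τ | p.1 ∉ M ∧ p.2 ∉ M} ≤ #(mulDefect τ) := by
    rw [← card_union_of_disjoint (by grind [disjoint_left]),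
      ← card_union_of_disjoint (by grind [disjoint_left])]
    exact card_le_card (by grind)
  change 3 * (#M * (Fintype.card G - 2 * #M)) ≤ _
  linarith

theorem le_card_mulDefect_of_three_le_card_support {τ : Perm G} (hτ : 3 ≤ #τ.support)
    (hsupp : 4 * #τ.support ≤ Fintype.card G) : 6 * Fintype.card G - 18 ≤ #(mulDefect τ) := by
  refine le_trans ?_ (three_mul_card_support_mul_le_card_mulDefect τ)
  obtain ⟨k, hk⟩ := Nat.exists_eq_add_of_le hτ
  obtain ⟨m, hm⟩ := Nat.exists_eq_add_of_le hsupp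
  rw [hm, show 4 * #τ.support + m - 2 * #τ.support = 2 * #τ.support + m by omega, hk,
    tsub_le_iff_right]
  nlinarith [mul_nonneg k.zero_le m.zero_le]

end Support

section Swap

variable {G : Type*} [Group G]

theorem mul_self_injective_of_odd_card [Fintype G] (hodd : Odd (Fintype.card G)) :
    Function.Injective fun x : G => x * x := by
  have hcop : (Nat.card G).Coprime 2 := by
    rwa [Nat.card_eq_fintype_card, Nat.coprime_two_right]
  simpa only [sq] using hcop.pow_left_bijective.injective

theorem mul_self_ne_one_of_odd_card [Fintype G] (hodd : Odd (Fintype.card G)) {x : G} (hx : x ≠ 1) :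
    x * x ≠ 1 := fun h =>
  hx (mul_self_injective_of_odd_card hodd (h.trans (mul_one 1).symm))

theorem ne_inv_of_odd_card [Fintype G] (hodd : Odd (Fintype.card G)) {u : G} (hu : u ≠ 1) :
    u ≠ u⁻¹ :=
  fun h => mul_self_ne_one_of_odd_card hodd hu (mul_eq_one_iff_eq_inv.2 h)

variable [DecidableEq G]

theorem swap_mul_ne {u v y : G} (huv : u ≠ v) (hy : y * y ≠ 1) (hu : y ≠ u) (hv : y ≠ v) :
    swap u v (u * y) ≠ swap u v u * swap u v y := by
  have huy : u * y ≠ u := fun h => hy (by rw [mul_eq_left.1 h, mul_one])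
  have hvy : u * y = v → v * y ≠ u := by
    rintro rfl h
    exact hy (by rwa [mul_assoc, mul_eq_left] at h)
  have huvy : u * y ≠ v * y := by simpa using huv
  grind

theorem swap_mul_self_ne {u v : G} (hu : u ≠ 1) (huv : u * u ≠ v * v)
    (h : ¬ (u * u = v ∧ v * v = u)) :
    swap u v (u * u) ≠ swap u v u * swap u v u := by
  have huu : u * u ≠ u := by simpa using hu
  grind

variable [Fintype G]

-- A pair `(x, y)` with `x` fixed is a defect as soon as one of `y`, `x * y` is moved; if both
-- are, then `{y, x * y} = {u, v}` and multiplicativity would force `x * x = 1`.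
theorem rowDefect_swap {u v x : G} (huv : u ≠ v) (hu : x ≠ u) (hv : x ≠ v) (hx : x * x ≠ 1) :
    rowDefect (swap u v) x = {u, v, x⁻¹ * u, x⁻¹ * v} := by
  have hx1 : x ≠ 1 := by rintro rfl; exact hx (mul_one 1)
  ext y
  simp only [mem_translationDefect, mem_insert, mem_singleton, eq_inv_mul_iff_mul_eq,
    swap_apply_of_ne_of_ne hu hv]
  have hxy : x * y ≠ y := by simpa using hx1
  have hxxy : x * (x * y) ≠ y := by rwa [← mul_assoc, ne_eq, mul_eq_right]
  have hxuv : x * u ≠ x * v := by simpa using huv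
  grind

theorem card_rowDefect_swap {u v x : G} (huv : u ≠ v) (hu : x ≠ u) (hv : x ≠ v)
    (hx : x * x ≠ 1) :
    #(rowDefect (swap u v) x) +
      (if x ∈ ({u * v⁻¹, v * u⁻¹} : Finset G) then 1 else 0) = 4 := by
  have hx1 : x ≠ 1 := by rintro rfl; exact hx (mul_one 1)
  have hxu : x * u ≠ u := by simpa using hx1
  have hxv : x * v ≠ v := by simpa using hx1
  have hxuv : ¬ (x * u = v ∧ x * v = u) := by
    rintro ⟨rfl, h⟩
    exact hx (by rwa [← mul_assoc, mul_eq_right] at h)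
  rw [rowDefect_swap huv hu hv hx]
  simp only [card_insert_eq_ite, card_singleton, mem_insert, mem_singleton, eq_inv_mul_iff_mul_eq,
    eq_mul_inv_iff_mul_eq, mul_inv_cancel_left]
  grind

theorem card_mulDefect_swap (hodd : Odd (Fintype.card G)) {u v : G} (huv : u ≠ v) :
    #(mulDefect (swap u v)) + #({u * v⁻¹, v * u⁻¹} \ {1, u, v} : Finset G) =
      4 * (Fintype.card G - #{1, u, v}) + ∑ x ∈ {1, u, v}, #(rowDefect (swap u v) x) := by
  let S : Finset G := {1, u, v}
  let T : Finset G := {u * v⁻¹, v * u⁻¹}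
  have hrow : ∀ x ∈ Sᶜ, #(rowDefect (swap u v) x) + (if x ∈ T then 1 else 0) = 4 := by
    intro x hx
    simp only [S, mem_compl, mem_insert, mem_singleton, not_or] at hx
    exact card_rowDefect_swap huv hx.2.1 hx.2.2 (mul_self_ne_one_of_odd_card hodd hx.1)
  have hT : ∑ x ∈ Sᶜ, (if x ∈ T then 1 else 0) = #(T \ S) := by
    rw [← card_filter, filter_mem_eq_inter, inter_comm, sdiff_eq_inter_compl]
  have hsum : ∑ x ∈ Sᶜ, #(rowDefect (swap u v) x) + #(T \ S) = 4 * (Fintype.card G - #S) := by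
    rw [← hT, ← sum_add_distrib, sum_congr rfl hrow, sum_const, card_compl, smul_eq_mul, mul_comm]
  rw [card_mulDefect, ← sum_add_sum_compl S]
  change _ + _ + #(T \ S) = 4 * (Fintype.card G - #S) + _
  rw [← hsum]
  ring

theorem card_sub_three_le_card_rowDefect_swap (hodd : Odd (Fintype.card G)) {u v : G}
    (huv : u ≠ v) : Fintype.card G - 3 ≤ #(rowDefect (swap u v) u) := by
  refine (Nat.sub_le_sub_left card_le_three _).trans
    (card_sub_card_le_card_translationDefect (S := {1, u, v}) fun y hy => ?_)
  simp only [mem_insert, mem_singleton, not_or] at hy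
  exact swap_mul_ne huv (mul_self_ne_one_of_odd_card hodd hy.1) hy.2.1 hy.2.2

theorem card_sub_two_le_card_rowDefect_swap (hodd : Odd (Fintype.card G)) {u v : G}
    (huv : u ≠ v) (hu : u ≠ 1) (h : ¬ (u * u = v ∧ v * v = u)) :
    Fintype.card G - 2 ≤ #(rowDefect (swap u v) u) := by
  refine (Nat.sub_le_sub_left card_le_two _).trans
    (card_sub_card_le_card_translationDefect (S := {1, v}) fun y hy => ?_)
  simp only [mem_insert, mem_singleton, not_or] at hy
  obtain rfl | hyu := eq_or_ne y u
  · exact swap_mul_self_ne hu ((mul_self_injective_of_odd_card hodd).ne huv) h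
  · exact swap_mul_ne huv (mul_self_ne_one_of_odd_card hodd hy.1) hyu hy.2

theorem le_card_mulDefect_swap_one (hodd : Odd (Fintype.card G)) {v : G} (hv : v ≠ 1) :
    6 * Fintype.card G - 13 ≤ #(mulDefect (swap 1 v)) := by
  have hdefect := card_mulDefect_swap hodd hv.symm
  have hrow_one : Fintype.card G - #∅ ≤ #(rowDefect (swap 1 v) 1) :=
    card_sub_card_le_card_translationDefect fun y _ => by simpa using hv
  have hrow := card_sub_three_le_card_rowDefect_swap hodd hv
  have hexc : #({1 * v⁻¹, v * 1⁻¹} \ {1, 1, v} : Finset G) ≤ 2 :=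
    (card_le_card sdiff_subset).trans card_le_two
  rw [swap_comm] at hrow
  rw [card_empty] at hrow_one
  rw [insert_idem] at hdefect hexc
  rw [sum_pair hv.symm, card_pair hv.symm] at hdefect
  omega

theorem card_mulDefect_swap_of_ne_one (hodd : Odd (Fintype.card G)) {u v : G} (huv : u ≠ v)
    (hu : u ≠ 1) (hv : v ≠ 1) :
    #(mulDefect (swap u v)) + #({u * v⁻¹, v * u⁻¹} \ {1, u, v} : Finset G) =
      4 * (Fintype.card G - 3) + (#(rowDefect (swap u v) u) + #(rowDefect (swap u v) v)) := by
  have hone : swap u v 1 = 1 := swap_apply_of_ne_of_ne hu.symm hv.symm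
  have hrow_one : rowDefect (swap u v) 1 = ∅ := by
    simp [eq_empty_iff_forall_notMem, mem_translationDefect, hone]
  rw [card_mulDefect_swap hodd huv, sum_insert (by simp [hu.symm, hv.symm]), sum_pair huv,
    card_eq_three.2 ⟨1, u, v, hu.symm, hv.symm, huv, rfl⟩, hrow_one, card_empty, zero_add]

theorem le_card_mulDefect_swap (hodd : Odd (Fintype.card G)) {u v : G} (huv : u ≠ v) :
    6 * Fintype.card G - 18 ≤ #(mulDefect (swap u v)) := by
  obtain rfl | hu := eq_or_ne u 1
  · exact le_trans (by omega) (le_card_mulDefect_swap_one hodd huv.symm)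
  obtain rfl | hv := eq_or_ne v 1
  · rw [swap_comm]
    exact le_trans (by omega) (le_card_mulDefect_swap_one hodd huv)
  have hdefect := card_mulDefect_swap_of_ne_one hodd huv hu hv
  by_cases hc : u * u = v ∧ v * v = u
  · have hrow_u := card_sub_three_le_card_rowDefect_swap hodd huv
    have hrow_v := card_sub_three_le_card_rowDefect_swap hodd huv.symm
    have hexc : ({u * v⁻¹, v * u⁻¹} : Finset G) \ {1, u, v} = ∅ := by
      have hvu : v * u⁻¹ = u := mul_inv_eq_of_eq_mul hc.1.symm
      have huv' : u * v⁻¹ = v := mul_inv_eq_of_eq_mul hc.2.symm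
      rw [hvu, huv', sdiff_eq_empty_iff_subset]
      grind
    rw [swap_comm] at hrow_v
    rw [hexc, card_empty] at hdefect
    omega
  · have hrow_u := card_sub_two_le_card_rowDefect_swap hodd huv hu hc
    have hrow_v := card_sub_two_le_card_rowDefect_swap hodd huv.symm hv (hc ∘ And.symm)
    have hexc : #({u * v⁻¹, v * u⁻¹} \ {1, u, v} : Finset G) ≤ 2 :=
      (card_le_card sdiff_subset).trans card_le_two
    rw [swap_comm] at hrow_v
    omega

theorem card_rowDefect_swap_inv_le {u : G} (hu : u ≠ 1) :
    #(rowDefect (swap u u⁻¹) u) ≤ Fintype.card G - 2 := by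
  have hone : swap u u⁻¹ 1 = 1 := swap_apply_of_ne_of_ne hu.symm (inv_ne_one.2 hu).symm
  rw [← card_pair (inv_ne_one.2 hu).symm]
  refine card_translationDefect_le_card_sub_card fun y hy => ?_
  simp only [mem_insert, mem_singleton] at hy
  rcases hy with rfl | rfl <;> simp [hone]

theorem card_rowDefect_swap_inv_le_of_mul_self_eq_inv (hodd : Odd (Fintype.card G)) {u : G}
    (hu : u ≠ 1) (huu : u * u = u⁻¹) :
    #(rowDefect (swap u u⁻¹) u) ≤ Fintype.card G - 3 := by
  have hone : swap u u⁻¹ 1 = 1 := swap_apply_of_ne_of_ne hu.symm (inv_ne_one.2 hu).symm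
  have hinv : u⁻¹ * u⁻¹ = u := by rw [← mul_inv_rev, huu, inv_inv]
  rw [← card_eq_three.2 ⟨1, u, u⁻¹, hu.symm, (inv_ne_one.2 hu).symm, ne_inv_of_odd_card hodd hu,
    rfl⟩]
  refine card_translationDefect_le_card_sub_card fun y hy => ?_
  simp only [mem_insert, mem_singleton] at hy
  rcases hy with rfl | rfl | rfl <;> simp [hone, huu, hinv]

theorem card_mulDefect_swap_inv (hodd : Odd (Fintype.card G)) {u : G} (hu : u ≠ 1) :
    #(mulDefect (swap u u⁻¹)) = 6 * Fintype.card G - 18 := by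
  have huv := ne_inv_of_odd_card hodd hu
  have hv : u⁻¹ ≠ 1 := inv_ne_one.2 hu
  refine le_antisymm ?_ (le_card_mulDefect_swap hodd huv)
  have hcard : 2 < Fintype.card G := Fintype.two_lt_card_iff.2 ⟨1, u, u⁻¹, hu.symm, hv.symm, huv⟩
  have hdefect := card_mulDefect_swap_of_ne_one hodd huv hu hv
  by_cases huu : u * u = u⁻¹
  · have hinv : u⁻¹ * u⁻¹ = u⁻¹⁻¹ := by rw [← mul_inv_rev, huu]
    have hrow_u := card_rowDefect_swap_inv_le_of_mul_self_eq_inv hodd hu huu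
    have hrow_inv := card_rowDefect_swap_inv_le_of_mul_self_eq_inv hodd hv hinv
    rw [inv_inv, swap_comm] at hrow_inv
    omega
  · have hrow_u := card_rowDefect_swap_inv_le hu
    have hrow_inv := card_rowDefect_swap_inv_le hv
    have hexc : #({u * u⁻¹⁻¹, u⁻¹ * u⁻¹} \ {1, u, u⁻¹} : Finset G) = 2 := by
      have hne : u * u ≠ u⁻¹ * u⁻¹ := (mul_self_injective_of_odd_card hodd).ne huv
      have huu_one := mul_self_ne_one_of_odd_card hodd hu
      have hinv_one := mul_self_ne_one_of_odd_card hodd hv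
      have hinv : u⁻¹ * u⁻¹ ≠ u := by rwa [← mul_inv_rev, ne_eq, inv_eq_iff_eq_inv]
      rw [inv_inv, sdiff_eq_self_of_disjoint, card_pair hne]
      simp [disjoint_left, huu_one, hinv_one, hu, huu, hinv]
    rw [inv_inv, swap_comm] at hrow_inv
    omega

end Swap

section OddOrder

variable {G : Type*} [Group G] [Fintype G]

theorem le_card_mulDefect_perm [DecidableEq G] (hodd : Odd (Fintype.card G)) {τ : Perm G}
    (hτ : τ ≠ 1) (hsupp : 4 * #τ.support ≤ Fintype.card G) :
    6 * Fintype.card G - 18 ≤ #(mulDefect τ) := by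
  obtain htwo | hthree := (Perm.two_le_card_support_of_ne_one hτ).eq_or_lt
  · obtain ⟨u, v, huv, rfl⟩ := Perm.card_support_eq_two.1 htwo.symm
    exact le_card_mulDefect_swap hodd huv
  · exact le_card_mulDefect_of_three_le_card_support hthree hsupp

theorem le_card_mulDefect_equiv {H : Type*} [Group H] [DecidableEq H]
    (hodd : Odd (Fintype.card G)) (hn : 32 < Fintype.card G) (f : G ≃ H)
    (hf : (mulDefect f).Nonempty) : 6 * Fintype.card G - 18 ≤ #(mulDefect f) := by
  classical
  by_contra! hlt
  have hsq : 6 * #(mulDefect f) < Fintype.card G ^ 2 := by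
    obtain ⟨k, hk⟩ := Nat.exists_eq_add_of_lt hn
    rw [hk] at hlt ⊢
    have : #(mulDefect f) ≤ 6 * k + 179 := by omega
    nlinarith
  obtain ⟨e, he⟩ := exists_mulEquiv_four_mul_hammingDist_lt f hsq
  let τ : Perm G := f.trans e.symm
  have hdefect : mulDefect τ = mulDefect f := mulDefect_mulEquiv_comp e.symm f
  have hsupp : #τ.support = hammingDist f e := by
    refine congrArg card (filter_congr fun x _ => ?_)
    simp [τ, MulEquiv.symm_apply_eq]
  rw [← hdefect] at hf hlt
  have hτ : τ ≠ 1 := by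
    intro h
    simp [h, mulDefect] at hf
  exact hlt.not_ge (le_card_mulDefect_perm hodd hτ (by omega))

theorem delta_of_odd_order_group_general [DecidableEq G] (hodd : Odd (Fintype.card G))
    (hn : 32 < Fintype.card G) : groupDelta G = 6 * Fintype.card G - 18 := by
  classical
  have : Nontrivial G := Fintype.one_lt_card_iff_nontrivial.1 (by omega)
  obtain ⟨u, hu⟩ := exists_ne (1 : G)
  have hswap := card_mulDefect_swap_inv hodd hu
  refine IsLeast.csInf_eq ⟨⟨pullbackMul (swap u u⁻¹), isGroupOp_pullbackMul _, ?_, ?_⟩, ?_⟩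
  · rw [← mulDefect_nonempty_iff, ← card_pos]
    omega
  · rw [opDist_pullbackMul, hswap]
  · rintro _ ⟨star, hstar, hne, rfl⟩
    obtain ⟨H, _, f, rfl⟩ := hstar.exists_eq_pullbackMul
    rw [opDist_pullbackMul]
    exact le_card_mulDefect_equiv hodd hn f ((mulDefect_nonempty_iff f).2 hne)

end OddOrder

/-- for a finite group `(G,∘)` of odd order `n > 50`,
`δ(G,∘) = 6n − 18`. -/
theorem delta_of_odd_order_group {G : Type*} [Group G] [Fintype G]
    [DecidableEq G] (n : ℕ) (hcard : Fintype.card G = n)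
    (hodd : Odd n) (hn : 50 < n) :
    groupDelta G = 6 * n - 18 := by
  subst hcard
  exact delta_of_odd_order_group_general hodd (by omega)
end

section
/- Let (G,∘) be a finite group of order n > 50 which is dihedral of twice odd order, i.e. G is isomorphic to the dihedral group of order 2m for some odd m (so n = 2m). Then δ(G,∘) = 6n − 20. -/
/-!
A group operation `star` close to the multiplication of `G` is a transport of it. Indeed, every `a`
can be written as `b * (b⁻¹ * a)` where the rows of `b` and of `b⁻¹ * a` in the two multiplication
tables almost agree; then the row of `a` in the table of `G` almost agrees with a unique row `f a`
of the table of `star`, and `f` is an isomorphism onto `(G, star)`. Each point moved by `f` costs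
almost a whole row, so `f` moves few points, and the distance is the number of pairs `(x, y)` with
`f (x * y) ≠ f x * f y`.

Every pair for which exactly one of `x`, `y`, `x * y` is moved is of this kind. If `f` moves `k`
points, there are at least `3 * k * n - 6 * k ^ 2` such pairs, which settles `3 ≤ k`. For a
transposition of `u` and `v` this number is `6 * n - 24`, up to a correction that only occurs when
`1`, `u ^ 2` or `v ^ 2` lies in `{u, v}`, and without it four further pairs are needed. If
`t = u⁻¹ * v` is an involution, they are the pairs in `{u, v} ×ˢ {u, v}`, because neither `u` nor
`v` commutes with `t`; there are no others, so the bound is attained. If `t` is not an involution,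
they are the pairs such as `(u, u⁻¹ * v)` for which one factor and the product are `u` and `v`.
-/

open Finset

namespace IsGroupOp

variable {G : Type*} {star : G → G → G}

theorem assoc (h : IsGroupOp star) (a b c : G) : star (star a b) c = star a (star b c) := by
  obtain ⟨_, _, hassoc, -⟩ := h
  exact hassoc a b c

theorem right_cancel (h : IsGroupOp star) {a b c : G} (habc : star a c = star b c) : a = b := by
  obtain ⟨e, inv, hassoc, -, hright, -, hinv⟩ := h
  simpa [hassoc, hinv, hright] using congrArg (star · (inv c)) habc

theorem hammingDist_eq_card [Fintype G] [DecidableEq G] (h : IsGroupOp star) {a b : G}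
    (hab : a ≠ b) : hammingDist (star a) (star b) = Fintype.card G := by
  rw [hammingDist, filter_true_of_mem, card_univ]
  exact fun _ _ hx => hab (h.right_cancel hx)

end IsGroupOp

/-- The multiplication of `M` carried over to `α` by a bijection. -/
def transportMul {M α : Type*} [Mul M] (f : M ≃ α) (a b : α) : α :=
  f (f.symm a * f.symm b)

theorem isGroupOp_transportMul {M α : Type*} [Group M] (f : M ≃ α) :
    IsGroupOp (transportMul f) :=
  ⟨f 1, fun a => f (f.symm a)⁻¹, by simp [transportMul, mul_assoc]⟩

theorem isGroupOp_mul (G : Type*) [Group G] : IsGroupOp fun a b : G => a * b :=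
  isGroupOp_transportMul (Equiv.refl G)

theorem hammingDist_comp_equiv {ι κ β : Type*} [Fintype ι] [Fintype κ] [DecidableEq β]
    (e : ι ≃ κ) (x y : κ → β) : hammingDist (x ∘ e) (y ∘ e) = hammingDist x y :=
  card_equiv e (by simp)

section NearbyOperations

variable {G : Type*} [Fintype G] [DecidableEq G]

theorem opDist_eq_sum_hammingDist (f g : G → G → G) :
    opDist f g = ∑ a, hammingDist (f a) (g a) := by
  simp only [opDist, hammingDist, card_filter, Fintype.sum_prod_type]

/-- The number of places in which the row of `a` in the multiplication table of `G` differs from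
the row of `b` in the table of `star`. -/
def rowDist [Mul G] (star : G → G → G) (a b : G) : ℕ :=
  hammingDist (a * ·) (star b)

variable [Group G] {star : G → G → G}

theorem rowDist_mul_le (h : IsGroupOp star) (a b a' b' : G) :
    rowDist star (a * b) (star a' b') ≤ rowDist star a a' + rowDist star b b' := by
  have hfst : hammingDist (a * b * ·) (fun x => star a' (b * x)) = rowDist star a a' := by
    simp only [mul_assoc]
    exact hammingDist_comp_equiv (Equiv.mulLeft b) (a * ·) (star a')
  have hsnd : hammingDist (fun x => star a' (b * x)) (star (star a' b')) ≤ rowDist star b b' := by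
    rw [funext (h.assoc a' b')]
    exact hammingDist_comp_le_hammingDist fun _ => star a'
  exact (hammingDist_triangle _ _ _).trans (add_le_add hfst.le hsnd)

theorem card_le_rowDist_add_left (h : IsGroupOp star) (a : G) {b c : G} (hbc : b ≠ c) :
    Fintype.card G ≤ rowDist star a b + rowDist star a c :=
  (h.hammingDist_eq_card hbc).symm.trans_le (hammingDist_triangle_left _ _ _)

theorem card_le_rowDist_add_right {a b : G} (hab : a ≠ b) (c : G) :
    Fintype.card G ≤ rowDist star a c + rowDist star b c :=
  ((isGroupOp_mul G).hammingDist_eq_card hab).symm.trans_le (hammingDist_triangle_right _ _ _)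

theorem exists_rowDist_lt (h : IsGroupOp star) {c : ℕ}
    (hc : 2 * opDist (fun a b : G => a * b) star < c * Fintype.card G) (a : G) :
    ∃ b, rowDist star a b < c := by
  have hsum : ∑ b : G, (rowDist star b b + rowDist star (b⁻¹ * a) (b⁻¹ * a)) =
      2 * opDist (fun a b : G => a * b) star := by
    rw [sum_add_distrib, two_mul, opDist_eq_sum_hammingDist]
    congr 1
    exact Fintype.sum_equiv ((Equiv.inv G).trans (Equiv.mulRight a)) _ _ fun _ => rfl
  obtain ⟨b, -, hb⟩ : ∃ b ∈ univ, rowDist star b b + rowDist star (b⁻¹ * a) (b⁻¹ * a) < c :=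
    exists_lt_of_sum_lt (by rwa [hsum, sum_const, card_univ, smul_eq_mul, mul_comm _ c])
  refine ⟨star b (b⁻¹ * a), lt_of_le_of_lt ?_ hb⟩
  simpa using rowDist_mul_le h b (b⁻¹ * a) b (b⁻¹ * a)

theorem exists_eq_transportMul (h : IsGroupOp star) {c : ℕ}
    (hc : 2 * opDist (fun a b : G => a * b) star < c * Fintype.card G)
    (hcn : 3 * c ≤ Fintype.card G) :
    ∃ f : Equiv.Perm G, star = transportMul f ∧
      #f.support * (Fintype.card G - c) ≤ opDist (fun a b : G => a * b) star := by
  choose f hf using exists_rowDist_lt h hc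
  have hinj : Function.Injective f := by
    intro a b hab
    by_contra hne
    have hrow := card_le_rowDist_add_right (star := star) hne (f b)
    have ha := hf a
    have hb := hf b
    rw [hab] at ha
    omega
  have hmul (a b : G) : f (a * b) = star (f a) (f b) := by
    by_contra hne
    have hrow := card_le_rowDist_add_left h (a * b) hne
    have hab := rowDist_mul_le h a b (f a) (f b)
    linarith [hf (a * b), hf a, hf b]
  have hmoved (a : G) (ha : f a ≠ a) : Fintype.card G - c ≤ rowDist star a a := by
    have hrow := card_le_rowDist_add_left h a ha
    have hfa := hf a
    omega
  let σ : Equiv.Perm G := .ofBijective f (Finite.injective_iff_bijective.mp hinj)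
  refine ⟨σ, funext₂ fun a b => ?_, ?_⟩
  · have hσ := hmul (σ.symm a) (σ.symm b)
    change σ _ = star (σ _) (σ _) at hσ
    simpa [transportMul] using hσ.symm
  · rw [opDist_eq_sum_hammingDist, ← smul_eq_mul]
    exact (card_nsmul_le_sum _ _ _ fun a ha => hmoved a (Equiv.Perm.mem_support.mp ha)).trans
      (sum_le_sum_of_subset (subset_univ σ.support))

end NearbyOperations

/-- The pairs at which `f` fails to be multiplicative. -/
def defect {M N : Type*} [Mul M] [Mul N] [Fintype M] [DecidableEq N] (f : M → N) :
    Finset (M × M) :=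
  {p | f (p.1 * p.2) ≠ f p.1 * f p.2}

theorem opDist_transportMul {M : Type*} [Mul M] [Fintype M] [DecidableEq M] (f : Equiv.Perm M) :
    opDist (fun a b : M => a * b) (transportMul f) = #(defect f) := by
  rw [opDist]
  exact card_equiv (f.symm.prodCongr f.symm) fun p => by
    rw [mem_filter_univ]
    simp [transportMul, defect, eq_comm]

theorem card_filter_equiv_mem_prod {α β γ : Type*} [Fintype α] [DecidableEq β] [DecidableEq γ]
    (e : α ≃ β × γ) (s : Finset β) (t : Finset γ) :
    #{a | (e a).1 ∈ s ∧ (e a).2 ∈ t} = #s * #t := by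
  rw [← card_product]
  exact card_equiv e (by simp)

section MeetsOnce

variable {G : Type*} [Fintype G] [DecidableEq G]

/-- The pairs `(x, y)` for which exactly one of `x`, `y`, `x * y` lies in `S`; if `S` is the set of
points moved by a permutation, these pairs always belong to its defect. -/
def meetsOnce [Mul G] (S : Finset G) : Finset (G × G) :=
  {p | (p.1 ∈ S ∧ p.2 ∉ S ∧ p.1 * p.2 ∉ S) ∨ (p.1 ∉ S ∧ p.2 ∈ S ∧ p.1 * p.2 ∉ S) ∨
    (p.1 ∉ S ∧ p.2 ∉ S ∧ p.1 * p.2 ∈ S)}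

/-- The pairs `(x, y)` for which all of `x`, `y`, `x * y` lie in `S`: the correction term in the
count of `meetsOnce S`. -/
def meetsThrice [Mul G] (S : Finset G) : Finset (G × G) :=
  {p | p.1 ∈ S ∧ p.2 ∈ S ∧ p.1 * p.2 ∈ S}

theorem card_meetsOnce_add_pairs [Mul G] (S : Finset G) :
    #(meetsOnce S) + 2 * (#{p : G × G | p.1 ∈ S ∧ p.2 ∈ S} +
        #{p : G × G | p.1 ∈ S ∧ p.1 * p.2 ∈ S} + #{p : G × G | p.2 ∈ S ∧ p.1 * p.2 ∈ S}) =
      #{p : G × G | p.1 ∈ S} + #{p : G × G | p.2 ∈ S} + #{p : G × G | p.1 * p.2 ∈ S} +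
        3 * #(meetsThrice S) := by
  simp only [meetsOnce, meetsThrice, card_filter, mul_sum, ← sum_add_distrib]
  refine sum_congr rfl fun p _ => ?_
  by_cases h₁ : p.1 ∈ S <;> by_cases h₂ : p.2 ∈ S <;> by_cases h₃ : p.1 * p.2 ∈ S <;>
    simp [h₁, h₂, h₃]

variable [Group G]

theorem card_meetsOnce (S : Finset G) :
    #(meetsOnce S) + 6 * #S ^ 2 = 3 * (#S * Fintype.card G) + 3 * #(meetsThrice S) := by
  let leftShear : G × G ≃ G × G := (Equiv.refl G).prodShear Equiv.mulLeft
  let rightShear : G × G ≃ G × G :=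
    (Equiv.prodComm G G).trans ((Equiv.refl G).prodShear Equiv.mulRight)
  have fst : #{p : G × G | p.1 ∈ S} = #S * Fintype.card G := by
    simpa using card_filter_equiv_mem_prod (Equiv.refl (G × G)) S univ
  have snd : #{p : G × G | p.2 ∈ S} = #S * Fintype.card G := by
    simpa using card_filter_equiv_mem_prod (Equiv.prodComm G G) S univ
  have prod : #{p : G × G | p.1 * p.2 ∈ S} = #S * Fintype.card G := by
    simpa [leftShear] using card_filter_equiv_mem_prod (leftShear.trans (Equiv.prodComm G G)) S univ
  have fst_snd : #{p : G × G | p.1 ∈ S ∧ p.2 ∈ S} = #S * #S :=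
    card_filter_equiv_mem_prod (Equiv.refl (G × G)) S S
  have fst_prod : #{p : G × G | p.1 ∈ S ∧ p.1 * p.2 ∈ S} = #S * #S := by
    simpa [leftShear] using card_filter_equiv_mem_prod leftShear S S
  have snd_prod : #{p : G × G | p.2 ∈ S ∧ p.1 * p.2 ∈ S} = #S * #S := by
    simpa [rightShear] using card_filter_equiv_mem_prod rightShear S S
  have key := card_meetsOnce_add_pairs S
  rw [fst, snd, prod, fst_snd, fst_prod, snd_prod] at key
  linarith

theorem card_meetsOnce_pair {u v : G} (huv : u ≠ v) :
    #(meetsOnce {u, v}) + 24 = 6 * Fintype.card G + 3 * #(meetsThrice {u, v}) := by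
  have h := card_meetsOnce {u, v}
  rw [card_pair huv] at h
  linarith

theorem meetsOnce_support_subset_defect (f : Equiv.Perm G) : meetsOnce f.support ⊆ defect f := by
  intro p hp
  simp only [meetsOnce, defect, mem_filter_univ, Equiv.Perm.mem_support, not_not] at hp ⊢
  rcases hp with ⟨h₁, h₂, h₃⟩ | ⟨h₁, h₂, h₃⟩ | ⟨h₁, h₂, h₃⟩
  · simpa [h₂, h₃] using h₁.symm
  · simpa [h₁, h₃] using h₂.symm
  · rwa [h₁, h₂]

theorem le_card_defect_of_three_le_card_support {f : Equiv.Perm G} (hn : 36 ≤ Fintype.card G)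
    (h3 : 3 ≤ #f.support) (h8 : #f.support ≤ 8) : 6 * Fintype.card G - 20 ≤ #(defect f) := by
  have hcount := card_meetsOnce f.support
  have hle := card_le_card (meetsOnce_support_subset_defect f)
  generalize #f.support = k at *
  interval_cases k <;> omega

end MeetsOnce

section InvolutionPair

open Equiv

theorem swap_apply_of_notMem {α : Type*} [DecidableEq α] {a b x : α}
    (hx : x ∉ ({a, b} : Finset α)) : swap a b x = x := by
  simp only [mem_insert, mem_singleton, not_or] at hx
  exact swap_apply_of_ne_of_ne hx.1 hx.2

variable {G : Type*} [Group G] [DecidableEq G] {u t x y : G}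

theorem swap_mul_apply_of_mem (ht : t * t = 1) (hx : x ∈ ({u, u * t} : Finset G)) :
    swap u (u * t) x = x * t := by
  rw [mem_insert, mem_singleton] at hx
  obtain rfl | rfl := hx <;> simp [mul_assoc, ht]

theorem inv_mul_eq_one_or_eq_of_mem (ht : t * t = 1)
    (hx : x ∈ ({u, u * t} : Finset G)) (hy : y ∈ ({u, u * t} : Finset G)) :
    x⁻¹ * y = 1 ∨ x⁻¹ * y = t := by
  have ht' : t⁻¹ = t := inv_eq_of_mul_eq_one_left ht
  rw [mem_insert, mem_singleton] at hx hy
  obtain rfl | rfl := hx <;> obtain rfl | rfl := hy <;> simp [ht', ht]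

theorem ne_one_and_ne_of_mem (ht : t * t = 1) (hu : u ≠ 1) (hut : u * t ≠ 1)
    (hx : x ∈ ({u, u * t} : Finset G)) : x ≠ 1 ∧ x ≠ t := by
  rw [mem_insert, mem_singleton] at hx
  obtain rfl | rfl := hx
  · exact ⟨hu, fun h => hut (by rwa [h])⟩
  · exact ⟨hut, by simpa using hu⟩

theorem mul_notMem_pair (ht : t * t = 1) (hu : u ≠ 1) (hut : u * t ≠ 1)
    (hx : x ∈ ({u, u * t} : Finset G)) (hy : y ∈ ({u, u * t} : Finset G)) :
    x * y ∉ ({u, u * t} : Finset G) := by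
  intro hxy
  obtain ⟨hy1, hyt⟩ := ne_one_and_ne_of_mem ht hu hut hy
  simpa [hy1, hyt] using inv_mul_eq_one_or_eq_of_mem ht hx hxy

end InvolutionPair

section Transposition

open Equiv

variable {G : Type*} [Group G] [Fintype G] [DecidableEq G] {u v t : G}

theorem le_card_defect_swap_of_disjoint (huv : u ≠ v) {E : Finset (G × G)}
    (hE : E ⊆ defect (swap u v)) (hdisj : Disjoint (meetsOnce {u, v}) E)
    (h4 : 4 ≤ #E + 3 * #(meetsThrice {u, v})) :
    6 * Fintype.card G - 20 ≤ #(defect (swap u v)) := by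
  have honce := meetsOnce_support_subset_defect (swap u v)
  rw [Perm.support_swap huv] at honce
  have hle := card_le_card (union_subset honce hE)
  rw [card_union_of_disjoint hdisj] at hle
  have hcount := card_meetsOnce_pair huv
  omega

theorem le_card_defect_swap_of_meetsThrice (huv : u ≠ v) (h : 1 < #(meetsThrice {u, v})) :
    6 * Fintype.card G - 20 ≤ #(defect (swap u v)) :=
  le_card_defect_swap_of_disjoint huv (empty_subset _) (disjoint_empty_right _) (by omega)

theorem le_card_defect_swap_one (hv : v ≠ 1) :
    6 * Fintype.card G - 20 ≤ #(defect (swap 1 v)) :=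
  le_card_defect_swap_of_meetsThrice hv.symm <| one_lt_card.mpr
    ⟨(1, v), by simp [meetsThrice], (v, 1), by simp [meetsThrice], by simp [hv]⟩

theorem le_card_defect_swap_mul_self (hu : u ≠ 1) :
    6 * Fintype.card G - 20 ≤ #(defect (swap u (u * u))) := by
  have huv : u ≠ u * u := by simpa using hu
  have huu : (u, u) ∈ meetsThrice {u, u * u} := by simp [meetsThrice]
  by_cases hsq : u * u * (u * u) = u
  · exact le_card_defect_swap_of_meetsThrice huv <| one_lt_card.mpr
      ⟨_, huu, (u * u, u * u), by simp [meetsThrice, hsq], by simpa using hu⟩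
  · refine le_card_defect_swap_of_disjoint (E := {(u, u)}) huv ?_ (by simp [meetsOnce]) ?_
    · simpa [defect, eq_comm] using hsq
    · have : 0 < #(meetsThrice {u, u * u}) := card_pos.mpr ⟨_, huu⟩
      rw [card_singleton]
      omega

theorem mk_inv_mul_mem_defect_swap (hu : u ≠ 1) (huu : u * u ≠ v) (h : v * u⁻¹ * v ≠ u) :
    (u, u⁻¹ * v) ∈ defect (swap u v) := by
  have hfix : swap u v (u⁻¹ * v) = u⁻¹ * v :=
    swap_apply_of_ne_of_ne (fun h => huu (inv_mul_eq_iff_eq_mul.mp h).symm) (by simpa using hu)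
  simpa [defect, hfix, ← mul_assoc] using h.symm

theorem mk_mul_inv_mem_defect_swap (hu : u ≠ 1) (huu : u * u ≠ v) (h : v * u⁻¹ * v ≠ u) :
    (v * u⁻¹, u) ∈ defect (swap u v) := by
  have hfix : swap u v (v * u⁻¹) = v * u⁻¹ :=
    swap_apply_of_ne_of_ne (fun h => huu (mul_inv_eq_iff_eq_mul.mp h).symm) (by simpa using hu)
  simpa [defect, hfix] using h.symm

theorem le_card_defect_swap_of_mul_inv_mul_ne (hu : u ≠ 1) (hv : v ≠ 1) (huu : u * u ≠ v)
    (hvv : v * v ≠ u) (huv : u ≠ v) (h : v * u⁻¹ * v ≠ u) :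
    6 * Fintype.card G - 20 ≤ #(defect (swap u v)) := by
  have h' : u * v⁻¹ * u ≠ v := by
    intro h'
    apply h
    nth_rw 2 [← h']
    group
  have hvu := mk_inv_mul_mem_defect_swap hv hvv h'
  have hvu' := mk_mul_inv_mem_defect_swap hv hvv h'
  rw [swap_comm] at hvu hvu'
  refine le_card_defect_swap_of_disjoint huv
    (E := {(u, u⁻¹ * v), (v, v⁻¹ * u), (v * u⁻¹, u), (u * v⁻¹, v)}) ?_ ?_ ?_
  · simp [insert_subset_iff, hvu, hvu', mk_inv_mul_mem_defect_swap hu huu h,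
      mk_mul_inv_mem_defect_swap hu huu h]
  · simp [meetsOnce]
  · have hinvu : u⁻¹ * v ≠ u := fun h => huu (inv_mul_eq_iff_eq_mul.mp h).symm
    have hinvv : v⁻¹ * u ≠ v := fun h => hvv (inv_mul_eq_iff_eq_mul.mp h).symm
    rw [card_insert_of_notMem, card_insert_of_notMem, card_pair] <;>
      simp [hu, hv, huv, hinvu, hinvv]

theorem defect_swap_mul_subset (ht : t * t = 1) :
    defect (swap u (u * t)) ⊆ meetsOnce {u, u * t} ∪ {u, u * t} ×ˢ {u, u * t} := by
  rintro ⟨x, y⟩ hxy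
  by_contra hnot
  simp only [mem_union, meetsOnce, mem_filter_univ, mem_product, defect] at hxy hnot
  apply hxy
  by_cases hx : x ∈ ({u, u * t} : Finset G) <;> by_cases hy : y ∈ ({u, u * t} : Finset G)
  · tauto
  · have hz : x * y ∈ ({u, u * t} : Finset G) := by tauto
    rw [swap_mul_apply_of_mem ht hz, swap_mul_apply_of_mem ht hx, swap_apply_of_notMem hy,
      mul_assoc, mul_assoc]
    have hyt := inv_mul_eq_one_or_eq_of_mem ht hx hz
    rw [inv_mul_cancel_left] at hyt
    obtain rfl | rfl := hyt <;> simp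
  · have hz : x * y ∈ ({u, u * t} : Finset G) := by tauto
    rw [swap_mul_apply_of_mem ht hz, swap_mul_apply_of_mem ht hy, swap_apply_of_notMem hx,
      mul_assoc]
  · have hz : x * y ∉ ({u, u * t} : Finset G) := by tauto
    rw [swap_apply_of_notMem hx, swap_apply_of_notMem hy, swap_apply_of_notMem hz]

theorem card_defect_swap_mul_le (ht : orderOf t = 2) (hu : u ≠ 1) (hut : u * t ≠ 1) :
    #(defect (swap u (u * t))) ≤ 6 * Fintype.card G - 20 := by
  obtain ⟨htt, ht1⟩ := orderOf_eq_prime_iff.mp ht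
  rw [pow_two] at htt
  have huv : u ≠ u * t := by simpa using ht1
  have hempty : meetsThrice {u, u * t} = ∅ := filter_eq_empty_iff.mpr
    fun _ _ ⟨hx, hy, hxy⟩ => mul_notMem_pair htt hu hut hx hy hxy
  have hle := (card_le_card (defect_swap_mul_subset (u := u) htt)).trans (card_union_le _ _)
  rw [card_product, card_pair huv] at hle
  have hcount := card_meetsOnce_pair huv
  rw [hempty, card_empty] at hcount
  omega

theorem transportMul_swap_ne_mul (hn : 4 < Fintype.card G) (huv : u ≠ v) :
    transportMul (swap u v) ≠ fun a b => a * b := by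
  intro h
  have hdefect := opDist_transportMul (swap u v)
  have hle := card_le_card (meetsOnce_support_subset_defect (swap u v))
  rw [Perm.support_swap huv, ← hdefect, h] at hle
  have hcount := card_meetsOnce_pair huv
  simp only [opDist, ne_eq, not_true_eq_false, filter_false, card_empty] at hle
  omega

theorem exists_isGroupOp_opDist_le (heven : Even (Fintype.card G)) (hn : 4 < Fintype.card G) :
    ∃ star : G → G → G, IsGroupOp star ∧ star ≠ (fun a b => a * b) ∧
      opDist (fun a b : G => a * b) star ≤ 6 * Fintype.card G - 20 := by
  obtain ⟨t, ht⟩ := exists_prime_orderOf_dvd_card 2 heven.two_dvd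
  obtain ⟨htt, ht1⟩ := orderOf_eq_prime_iff.mp ht
  obtain ⟨u, hu⟩ : ∃ u, u ∉ ({1, t} : Finset G) := by
    by_contra! h
    have := (card_le_card fun u _ => h u : #univ ≤ #{1, t}).trans card_le_two
    rw [card_univ] at this
    omega
  rw [mem_insert, mem_singleton, not_or] at hu
  have hut : u * t ≠ 1 := fun h => hu.2 (mul_right_cancel (h.trans (by rw [← htt, pow_two])))
  refine ⟨_, isGroupOp_transportMul (swap u (u * t)),
    transportMul_swap_ne_mul hn (by simpa using ht1), ?_⟩
  rw [opDist_transportMul]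
  exact card_defect_swap_mul_le ht hu.1 hut

end Transposition

/-- An involution commutes only with itself and the identity: the property of dihedral groups of
twice odd order on which the lower bound rests. It is shared by the generalized dihedral groups of
abelian groups of odd order. -/
def InvolutionsSelfCentralizing (G : Type*) [Group G] : Prop :=
  ∀ ⦃t u : G⦄, orderOf t = 2 → Commute t u → u = 1 ∨ u = t

namespace InvolutionsSelfCentralizing

open Equiv

theorem of_injective {G H : Type*} [Group G] [Group H] (hH : InvolutionsSelfCentralizing H)
    (φ : G →* H) (hφ : Function.Injective φ) : InvolutionsSelfCentralizing G := by
  intro t u ht htu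
  rw [← orderOf_injective φ hφ] at ht
  simpa [hφ.eq_iff, map_eq_one_iff φ hφ] using hH ht (htu.map φ)

variable {G : Type*} [Group G] [Fintype G] [DecidableEq G]

theorem le_card_defect_swap_mul (hG : InvolutionsSelfCentralizing G) {u t : G}
    (ht : orderOf t = 2) (hu : u ≠ 1) (hut : u * t ≠ 1) :
    6 * Fintype.card G - 20 ≤ #(defect (swap u (u * t))) := by
  obtain ⟨htt, ht1⟩ := orderOf_eq_prime_iff.mp ht
  rw [pow_two] at htt
  have huv : u ≠ u * t := by simpa using ht1
  refine le_card_defect_swap_of_disjoint (E := {u, u * t} ×ˢ {u, u * t}) huv ?_ ?_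
    (by simp [card_pair huv])
  · rintro ⟨x, y⟩ hxy
    obtain ⟨hx, hy⟩ := mem_product.mp hxy
    rw [defect, mem_filter_univ, swap_mul_apply_of_mem htt hx, swap_mul_apply_of_mem htt hy,
      swap_apply_of_notMem (mul_notMem_pair htt hu hut hx hy)]
    intro h
    have hcomm : Commute t y := by
      have hy' : y = t * (y * t) := mul_left_cancel (h.trans (mul_assoc x t (y * t)))
      rw [Commute, SemiconjBy]
      nth_rw 1 [hy']
      rw [← mul_assoc, htt, one_mul]
    obtain ⟨hy1, hyt⟩ := ne_one_and_ne_of_mem htt hu hut hy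
    exact (hG ht hcomm).elim hy1 hyt
  · rw [disjoint_left]
    simp only [meetsOnce, mem_filter_univ, mem_product]
    tauto

theorem le_card_defect_swap (hG : InvolutionsSelfCentralizing G) {u v : G} (huv : u ≠ v) :
    6 * Fintype.card G - 20 ≤ #(defect (swap u v)) := by
  obtain rfl | hu := eq_or_ne u 1
  · exact le_card_defect_swap_one huv.symm
  obtain rfl | hv := eq_or_ne v 1
  · rw [swap_comm]
    exact le_card_defect_swap_one hu
  obtain rfl | huu := eq_or_ne (u * u) v
  · exact le_card_defect_swap_mul_self hu
  obtain rfl | hvv := eq_or_ne (v * v) u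
  · rw [swap_comm]
    exact le_card_defect_swap_mul_self hv
  by_cases hw : v * u⁻¹ * v = u
  · have hord : orderOf (u⁻¹ * v) = 2 := by
      refine orderOf_eq_prime ?_ (by simpa [inv_mul_eq_one] using huv)
      rw [pow_two, mul_assoc, ← mul_assoc v, hw, inv_mul_cancel]
    simpa using hG.le_card_defect_swap_mul hord hu (by simpa using hv)
  · exact le_card_defect_swap_of_mul_inv_mul_ne hu hv huu hvv huv hw

theorem le_opDist (hG : InvolutionsSelfCentralizing G) (hn : 36 ≤ Fintype.card G)
    {star : G → G → G} (h : IsGroupOp star) (hne : star ≠ fun a b => a * b) :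
    6 * Fintype.card G - 20 ≤ opDist (fun a b : G => a * b) star := by
  by_contra! hlt
  -- `c = 12` because twice the distance is below `12 * n`.
  obtain ⟨f, rfl, hsupp⟩ := exists_eq_transportMul h (c := 12) (by omega) (by omega)
  have hf : f ≠ 1 := by
    rintro rfl
    exact hne rfl
  have h8 : #f.support ≤ 8 := by
    by_contra! h9
    have := Nat.mul_le_mul_right (Fintype.card G - 12) h9
    omega
  rw [opDist_transportMul] at hlt
  refine hlt.not_ge ?_
  obtain h2 | h3 := (Perm.two_le_card_support_of_ne_one hf).eq_or_lt
  · obtain ⟨u, v, huv, rfl⟩ := Perm.card_support_eq_two.mp h2.symm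
    exact hG.le_card_defect_swap huv
  · exact le_card_defect_of_three_le_card_support hn h3 h8

end InvolutionsSelfCentralizing

theorem involutionsSelfCentralizing_dihedralGroup {m : ℕ} (hm : Odd m) :
    InvolutionsSelfCentralizing (DihedralGroup m) := by
  intro t u ht htu
  obtain ⟨htt, ht1⟩ := orderOf_eq_prime_iff.mp ht
  rw [pow_two] at htt
  rcases t with i | i
  · rw [DihedralGroup.r_mul_r, DihedralGroup.one_def, DihedralGroup.r.injEq,
      ZMod.add_self_eq_zero_iff_eq_zero hm] at htt
    exact absurd (by rw [htt, DihedralGroup.one_def]) ht1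
  rcases u with j | j
  · left
    have h : i + j = i - j := by simpa using htu.eq
    have hj : j = 0 := (ZMod.add_self_eq_zero_iff_eq_zero hm).mp (by linear_combination h)
    rw [hj, DihedralGroup.one_def]
  · right
    have h : j - i = i - j := by simpa using htu.eq
    have hji : j - i = 0 := (ZMod.add_self_eq_zero_iff_eq_zero hm).mp (by linear_combination h)
    rw [sub_eq_zero.mp hji]

theorem delta_of_dihedral_twice_odd_order_general {G : Type*} [Group G] [Fintype G]
    [DecidableEq G] (hG : InvolutionsSelfCentralizing G) (heven : Even (Fintype.card G))
    (hn : 36 ≤ Fintype.card G) : groupDelta G = 6 * Fintype.card G - 20 := by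
  obtain ⟨star, hstar, hne, hle⟩ := exists_isGroupOp_opDist_le heven (by omega)
  refine IsLeast.csInf_eq ⟨⟨star, hstar, hne, (hG.le_opDist hn hstar hne).antisymm hle⟩, ?_⟩
  rintro _ ⟨op, hop, hop_ne, rfl⟩
  exact hG.le_opDist hn hop hop_ne

/-- for a finite group `(G,∘)` of order `n > 50` which is
dihedral of twice odd order (`G ≃ DihedralGroup m` with `m` odd, `n = 2m`),
`δ(G,∘) = 6n − 20`. -/
theorem delta_of_dihedral_twice_odd_order {G : Type*} [Group G] [Fintype G]
    [DecidableEq G] (n m : ℕ) (hcard : Fintype.card G = n) (hn : 50 < n)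
    (hm : Odd m) (hnm : n = 2 * m)
    (hdih : Nonempty (G ≃* DihedralGroup m)) :
    groupDelta G = 6 * n - 20 := by
  obtain ⟨φ⟩ := hdih
  subst hcard
  exact delta_of_dihedral_twice_odd_order_general
    ((involutionsSelfCentralizing_dihedralGroup hm).of_injective φ.toMonoidHom φ.injective)
    (hnm ▸ even_two_mul m) (by omega)
end

section
/- For every positive integer n, every Latin square L of order n, and every critical set C of L, the cardinality of C satisfies |C| ≥ n·⌊(1/2)·(log n)^{1/3}⌋, where log denotes the natural logarithm and ⌊·⌋ is the floor function. In particular, scs(n), the size of a smallest critical set in a Latin square of order n, is at least n·⌊(1/2)·(log n)^{1/3}⌋. -/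
/-- `L` is a Latin square on `Q`: every row and column is a bijection. -/
def IsLatinSquare {Q : Type*} (L : Q → Q → Q) : Prop :=
  (∀ i, Function.Bijective (L i)) ∧ (∀ j, Function.Bijective fun i => L i j)

/-- The set of triples `C` is contained in (the set of triples of) the
Latin square `L`. -/
def ContainedIn {Q : Type*} (C : Set (Q × Q × Q)) (L : Q → Q → Q) : Prop :=
  ∀ t ∈ C, L t.1 t.2.1 = t.2.2

/-- `C` is a critical set of the Latin square `L`: `C` is contained in `L`,
`L` is the only Latin square containing `C`, and no proper subset of `C`
has this property. -/
def IsCriticalSet {Q : Type*} (C : Set (Q × Q × Q)) (L : Q → Q → Q) : Prop :=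
  ContainedIn C L ∧
  (∀ L' : Q → Q → Q, IsLatinSquare L' → ContainedIn C L' → L' = L) ∧
  (∀ C' : Set (Q × Q × Q), C' ⊂ C →
    ∃ L' : Q → Q → Q, IsLatinSquare L' ∧ ContainedIn C' L' ∧ L' ≠ L)

/-!
Fix two rows `a`, `b`. If some row cycle of `a` and `b` avoided `C`, interchanging the two rows
along it would complete `C` differently; so every row cycle meets `C`, and cutting the cycles at the
columns in which `C` meets `a` or `b` leaves arcs, one for each such column. Two symbols on the same
arc are linked by a piece of it that avoids `C`. In the same way, for any two symbols `x`, `y`, the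
rows are split into arcs by the entries of `C` with symbol `x` or `y`.

Suppose `C` has fewer than `k n` entries. Then many rows, and many symbols, have at most `k` entries
of `C` each. Fix `2k + 1` such rows. As these symbols are numerous, two of them, `x` and `y`, share
an arc for every pair of the rows and have no common column within the rows. There are at most `2k`
arcs for `x`, `y`, so two of the rows, `a` and `b`, share one of them. Interchanging `a` and `b`
along a piece of the first arc spoils only the occurrences of `x` and `y` in these rows, and
interchanging `x` and `y` along a piece of the second arc repairs them: this is a second completion
of `C`. There are enough symbols as soon as `2 ^ (11 k³) ≤ n`.
-/

/-- `C` is a defining set of `L`, also called a uniquely completable set: `L` is the only Latin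
square containing `C`. Critical sets are the minimal defining sets. -/
def IsDefiningSet {Q : Type*} (C : Set (Q × Q × Q)) (L : Q → Q → Q) : Prop :=
  ContainedIn C L ∧ ∀ L' : Q → Q → Q, IsLatinSquare L' → ContainedIn C L' → L' = L

theorem IsCriticalSet.isDefiningSet {Q : Type*} {C : Set (Q × Q × Q)} {L : Q → Q → Q}
    (hC : IsCriticalSet C L) : IsDefiningSet C L :=
  ⟨hC.1, hC.2.1⟩

section Linked

variable {U V : Type*} {f g : U ≃ V} {D : Set V} {u v : U}

/-- The permutation `g⁻¹ ∘ f`. When `f` and `g` send each symbol to its column in two rows of a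
Latin square, its cycles are the row cycles of these two rows. -/
def cyclePerm (f g : U ≃ V) : Equiv.Perm U := f.trans g.symm

theorem apply_cyclePerm_symm (f g : U ≃ V) (w : U) : f ((cyclePerm f g).symm w) = g w := by
  simp [cyclePerm]

/-- `D` meets every cycle of `f` and `g`. A union of cycles is encoded by the set `J` of its values,
which is a set with equal preimages under `f` and `g`. -/
def Blocks (f g : U ≃ V) (D : Set V) : Prop :=
  ∀ J : Set V, Disjoint J D → f ⁻¹' J = g ⁻¹' J → J = ∅

/-- `J` behaves like the set of values of `f` on an arc of a cycle of `f` and `g` that starts at one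
of `u`, `v` and stops just before the other: it separates `f u` and `g v` from `f v` and `g u`, and
`f` and `g` agree on membership in `J` away from `u` and `v`. Either direction of the arc is
allowed, which makes the notion symmetric in `u` and `v`. -/
def IsArc (f g : U ≃ V) (J : Set V) (u v : U) : Prop :=
  (f u ∈ J ↔ g v ∈ J) ∧ (f v ∈ J ↔ g u ∈ J) ∧ (f u ∈ J ↔ f v ∉ J) ∧
    ∀ w, w ≠ u → w ≠ v → (f w ∈ J ↔ g w ∈ J)

/-- `u` and `v` are joined by an arc of a cycle of `f` and `g` that avoids `D`. -/
def Linked (f g : U ≃ V) (D : Set V) (u v : U) : Prop :=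
  ∃ J : Set V, Disjoint J D ∧ IsArc f g J u v

theorem IsArc.symm {J : Set V} (h : IsArc f g J u v) : IsArc f g J v u := by
  obtain ⟨huv, hvu, hne, hJ⟩ := h
  exact ⟨hvu, huv, by tauto, fun w hv hu => hJ w hu hv⟩

theorem Linked.symm (h : Linked f g D u v) : Linked f g D v u :=
  h.imp fun _ hJ => ⟨hJ.1, hJ.2.symm⟩

theorem Linked.ne (h : Linked f g D u v) : u ≠ v := by
  rintro rfl
  obtain ⟨J, -, -, -, hJ, -⟩ := h
  exact iff_not_self hJ

theorem exists_arc_of_pow_apply_eq (σ : Equiv.Perm U) (huv : u ≠ v) {t : ℕ}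
    (ht : (σ ^ t) u = v) :
    ∃ S : Set U, (∀ w ∈ S, ∃ i < t, (σ ^ i) u = w) ∧ u ∈ S ∧ σ.symm u ∉ S ∧ v ∉ S ∧
      σ.symm v ∈ S ∧ ∀ w, w ≠ u → w ≠ v → (w ∈ S ↔ σ.symm w ∈ S) := by
  classical
  obtain ⟨s, hs, hst, hmin⟩ : ∃ s, (σ ^ s) u = v ∧ s ≤ t ∧ ∀ i < s, (σ ^ i) u ≠ v :=
    have hex : ∃ s, (σ ^ s) u = v := ⟨t, ht⟩
    ⟨Nat.find hex, Nat.find_spec hex, Nat.find_min' hex ht, fun i hi => Nat.find_min hex hi⟩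
  have hspos : 0 < s := Nat.pos_of_ne_zero fun h => huv (by simpa [h] using hs)
  have hsymm (w : U) : (∃ i < s, (σ ^ i) u = σ.symm w) ↔ ∃ i < s, (σ ^ (i + 1)) u = w := by
    simp only [Equiv.eq_symm_apply, pow_succ', Equiv.Perm.mul_apply]
  refine ⟨{w | ∃ i < s, (σ ^ i) u = w}, ?_, ⟨0, hspos, rfl⟩, ?_, ?_, ?_, ?_⟩
  · rintro w ⟨i, hi, hw⟩
    exact ⟨i, hi.trans_le hst, hw⟩
  · intro hu
    obtain ⟨i, hi, hreturn⟩ := (hsymm u).1 hu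
    refine hmin (s - (i + 1)) (by lia) ?_
    calc (σ ^ (s - (i + 1))) u = (σ ^ (s - (i + 1))) ((σ ^ (i + 1)) u) := by rw [hreturn]
      _ = (σ ^ s) u := by rw [← Equiv.Perm.mul_apply, ← pow_add, Nat.sub_add_cancel hi]
      _ = v := hs
  · rintro ⟨i, hi, hv⟩
    exact hmin i hi hv
  · exact (hsymm v).2 ⟨s - 1, by lia, by rw [Nat.sub_add_cancel hspos, hs]⟩
  · intro w hwu hwv
    refine Iff.trans ⟨?_, ?_⟩ (hsymm w).symm
    · rintro ⟨_ | i, hi, hw⟩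
      · exact absurd hw.symm hwu
      · exact ⟨i, by lia, hw⟩
    · rintro ⟨i, hi, hw⟩
      exact ⟨i + 1, lt_of_le_of_ne hi fun h => hwv (by rw [← hw, h, hs]), hw⟩

theorem linked_of_pow_apply_eq (huv : u ≠ v) {t : ℕ} (ht : (cyclePerm f g ^ t) u = v)
    (hD : ∀ i < t, f ((cyclePerm f g ^ i) u) ∉ D) : Linked f g D u v := by
  obtain ⟨S, hS, hu, hu', hv, hv', hw⟩ := exists_arc_of_pow_apply_eq _ huv ht
  have hf (w : U) : f w ∈ f '' S ↔ w ∈ S := f.injective.mem_set_image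
  have hg (w : U) : g w ∈ f '' S ↔ (cyclePerm f g).symm w ∈ S := by
    rw [← apply_cyclePerm_symm f g, hf]
  refine ⟨f '' S, ?_, ?_⟩
  · rw [Set.disjoint_left]
    rintro _ ⟨w, hwS, rfl⟩
    obtain ⟨i, hi, rfl⟩ := hS w hwS
    exact hD i hi
  · simp only [IsArc, hf, hg]
    tauto

namespace Blocks

theorem exists_pow_apply_mem [Finite U] (h : Blocks f g D) (u : U) :
    ∃ i, f ((cyclePerm f g ^ i) u) ∈ D := by
  by_contra! hu
  have hempty : f '' {w | (cyclePerm f g).SameCycle u w} = ∅ := by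
    refine h _ (Set.disjoint_left.2 ?_) (Set.ext fun w => ?_)
    · rintro _ ⟨w, hw, rfl⟩
      obtain ⟨i, rfl⟩ := Equiv.Perm.SameCycle.exists_nat_pow_eq hw
      exact hu i
    · rw [Set.mem_preimage, Set.mem_preimage, ← apply_cyclePerm_symm f g,
        f.injective.mem_set_image, f.injective.mem_set_image]
      exact Equiv.Perm.sameCycle_symm_apply_right.symm
  exact Set.notMem_empty (f u) (hempty ▸ ⟨u, Equiv.Perm.SameCycle.refl _ _, rfl⟩)

/-- The label of `u` is the first element of `D` met when following the cycle of `f` and `g` that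
starts at `u`. -/
theorem exists_label [Finite U] (h : Blocks f g D) :
    ∃ l : U → V, (∀ u, l u ∈ D) ∧ ∀ u v, l u = l v → u ≠ v → Linked f g D u v := by
  classical
  set σ := cyclePerm f g
  have hit := h.exists_pow_apply_mem
  have linked_of_le : ∀ u v, u ≠ v → (σ ^ Nat.find (hit u)) u = (σ ^ Nat.find (hit v)) v →
      Nat.find (hit v) ≤ Nat.find (hit u) → Linked f g D u v := by
    intro u v huv heq hle
    refine linked_of_pow_apply_eq huv (t := Nat.find (hit u) - Nat.find (hit v)) ?_
      fun i hi => Nat.find_min (hit u) (by lia)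
    apply (σ ^ Nat.find (hit v)).injective
    rw [← heq, ← Equiv.Perm.mul_apply, ← pow_add, Nat.add_sub_cancel' hle]
  refine ⟨fun u => f ((σ ^ Nat.find (hit u)) u), fun u => Nat.find_spec (hit u), ?_⟩
  intro u v heq huv
  have heq' := f.injective heq
  rcases le_total (Nat.find (hit v)) (Nat.find (hit u)) with hle | hle
  · exact linked_of_le u v huv heq' hle
  · exact (linked_of_le v u huv.symm heq'.symm hle).symm

theorem exists_subset_pairwise_linked [Finite U] (h : Blocks f g D) {d m : ℕ}
    (hD : D.ncard ≤ d) {X : Finset U} (hX : d * m < X.card) :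
    ∃ Y ⊆ X, m < Y.card ∧ (Y : Set U).Pairwise (Linked f g D) := by
  classical
  have : Finite V := Finite.of_equiv U f
  obtain ⟨l, hl, hlink⟩ := h.exists_label
  obtain ⟨j, -, hj⟩ := Finset.exists_lt_card_fiber_of_mul_lt_card_of_maps_to
    (t := D.toFinite.toFinset) (f := l) (n := m) (by simpa using fun u _ => hl u)
    (by rw [← Set.ncard_eq_toFinset_card]; exact (Nat.mul_le_mul_right m hD).trans_lt hX)
  refine ⟨{u ∈ X | l u = j}, Finset.filter_subset _ _, hj, fun u hu v hv => hlink u v ?_⟩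
  exact (Finset.mem_filter.1 hu).2.trans (Finset.mem_filter.1 hv).2.symm

theorem exists_subset_pairwise_linked_family [Finite U] {ι : Type*} (P : Finset ι)
    {f g : ι → U ≃ V} {D : ι → Set V} (h : ∀ p ∈ P, Blocks (f p) (g p) (D p)) {d m : ℕ}
    (hD : ∀ p ∈ P, (D p).ncard ≤ d) {X : Finset U} (hX : d ^ P.card * m < X.card) :
    ∃ Y ⊆ X, m < Y.card ∧ ∀ p ∈ P, (Y : Set U).Pairwise (Linked (f p) (g p) (D p)) := by
  classical
  induction P using Finset.induction_on generalizing X with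
  | empty => exact ⟨X, subset_rfl, by simpa using hX, by simp⟩
  | insert p P hp ih =>
    rw [Finset.forall_mem_insert] at h hD
    rw [Finset.card_insert_of_notMem hp, pow_succ', mul_assoc] at hX
    obtain ⟨Z, hZX, hZ, hpZ⟩ := h.1.exists_subset_pairwise_linked hD.1 hX
    obtain ⟨Y, hYZ, hY, hPY⟩ := ih h.2 hD.2 hZ
    exact ⟨Y, hYZ.trans hZX, hY, (Finset.forall_mem_insert _ _ _).2
      ⟨hpZ.mono (Finset.coe_subset.2 hYZ), hPY⟩⟩

end Blocks

end Linked

section Interchange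

variable {Q : Type*} {L : Q → Q → Q} {C : Set (Q × Q × Q)} {a b x y : Q} {J K : Set Q}

/-- The columns in which `C` meets the row `a`. -/
def rowColumns (C : Set (Q × Q × Q)) (a : Q) : Set Q :=
  (fun t => t.2.1) '' {t ∈ C | t.1 = a}

/-- The columns in which `C` contains the symbol `x`. -/
def symbolColumns (C : Set (Q × Q × Q)) (x : Q) : Set Q :=
  (fun t => t.2.1) '' {t ∈ C | t.2.2 = x}

open Classical in
/-- The array obtained from `L` by interchanging the rows `a` and `b` within the columns in `J`. -/
noncomputable def rowInterchange (L : Q → Q → Q) (a b : Q) (J : Set Q) (r j : Q) : Q :=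
  if j ∈ J then L (Equiv.swap a b r) j else L r j

open Classical in
/-- The array obtained from `L` by interchanging the symbols `x` and `y` within the columns in
`K`. -/
noncomputable def symbolInterchange (L : Q → Q → Q) (x y : Q) (K : Set Q) (r j : Q) : Q :=
  if j ∈ K then Equiv.swap x y (L r j) else L r j

theorem bijective_rowInterchange_column {j : Q} (h : Function.Bijective fun r => L r j) :
    Function.Bijective fun r => rowInterchange L a b J r j := by
  classical
  by_cases hj : j ∈ J
  · simp only [rowInterchange, if_pos hj]
    exact h.comp (Equiv.swap a b).bijective
  · simpa [rowInterchange, hj] using h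

theorem bijective_symbolInterchange_column {j : Q} (h : Function.Bijective fun r => L r j) :
    Function.Bijective fun r => symbolInterchange L x y K r j := by
  classical
  by_cases hj : j ∈ K
  · simp only [symbolInterchange, if_pos hj]
    exact (Equiv.swap x y).bijective.comp h
  · simpa [symbolInterchange, hj] using h

theorem containedIn_rowInterchange (hC : ContainedIn C L)
    (hJ : Disjoint J (rowColumns C a ∪ rowColumns C b)) :
    ContainedIn C (rowInterchange L a b J) := by
  classical
  intro t ht
  rw [rowInterchange]
  split_ifs with htJ
  · have hcol := Set.disjoint_left.1 hJ htJ
    rw [Equiv.swap_apply_of_ne_of_ne (fun ha => hcol (.inl ⟨t, ⟨ht, ha⟩, rfl⟩))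
      (fun hb => hcol (.inr ⟨t, ⟨ht, hb⟩, rfl⟩)), hC t ht]
  · exact hC t ht

theorem containedIn_symbolInterchange (hC : ContainedIn C L)
    (hK : Disjoint K (symbolColumns C x ∪ symbolColumns C y)) :
    ContainedIn C (symbolInterchange L x y K) := by
  classical
  intro t ht
  rw [symbolInterchange, hC t ht]
  split_ifs with htK
  · have hcol := Set.disjoint_left.1 hK htK
    exact Equiv.swap_apply_of_ne_of_ne (fun hx => hcol (.inl ⟨t, ⟨ht, hx⟩, rfl⟩))
      (fun hy => hcol (.inr ⟨t, ⟨ht, hy⟩, rfl⟩))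
  · rfl

theorem surjective_symbolInterchange_of_repeated {r z j₁ j₂ : Q} (hz : z = x ∨ z = y)
    (hrest : ∀ s, s ≠ x → s ≠ y → ∃ j, L r j = s) (h₁ : L r j₁ = z) (h₂ : L r j₂ = z)
    (hj₁ : j₁ ∈ K) (hj₂ : j₂ ∉ K) : Function.Surjective (symbolInterchange L x y K r) := by
  classical
  intro s
  by_cases hs : s = x ∨ s = y
  · rcases eq_or_ne s z with rfl | hsz
    · exact ⟨j₂, by rw [symbolInterchange, if_neg hj₂, h₂]⟩
    · refine ⟨j₁, ?_⟩
      rw [symbolInterchange, if_pos hj₁, h₁]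
      rcases hz with rfl | rfl
      · rw [Equiv.swap_apply_left, hs.resolve_left hsz]
      · rw [Equiv.swap_apply_right, hs.resolve_right hsz]
  · push Not at hs
    obtain ⟨j, rfl⟩ := hrest s hs.1 hs.2
    exact ⟨j, by rw [symbolInterchange, Equiv.swap_apply_of_ne_of_ne hs.1 hs.2, ite_self]⟩

end Interchange

namespace IsLatinSquare

variable {Q : Type*} {L : Q → Q → Q} {a b x y : Q} {J K : Set Q}

theorem of_surjective_rows [Finite Q] (hrow : ∀ r, Function.Surjective (L r))
    (hcol : ∀ j, Function.Bijective fun r => L r j) : IsLatinSquare L :=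
  ⟨fun r => Finite.surjective_iff_bijective.1 (hrow r), hcol⟩

/-- The bijection sending each symbol to its column in the row `r`. -/
noncomputable def columnInRow (hL : IsLatinSquare L) (r : Q) : Q ≃ Q :=
  (Equiv.ofBijective (L r) (hL.1 r)).symm

theorem apply_eq_iff (hL : IsLatinSquare L) {r j s : Q} : L r j = s ↔ j = hL.columnInRow r s :=
  (Equiv.eq_symm_apply (Equiv.ofBijective (L r) (hL.1 r))).symm

theorem apply_columnInRow (hL : IsLatinSquare L) (r s : Q) : L r (hL.columnInRow r s) = s :=
  hL.apply_eq_iff.2 rfl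

/-- The bijection sending each row to the column in which it contains the symbol `s`. -/
noncomputable def columnOfSymbol (hL : IsLatinSquare L) (s : Q) : Q ≃ Q :=
  Equiv.ofBijective (fun r => hL.columnInRow r s) <| by
    refine ⟨fun r r' h => (hL.2 (hL.columnInRow r s)).injective ?_, fun j => ?_⟩
    · exact (hL.apply_columnInRow r s).trans (hL.apply_eq_iff.2 h).symm
    · obtain ⟨r, hr⟩ := (hL.2 j).surjective s
      exact ⟨r, (hL.apply_eq_iff.1 hr).symm⟩

theorem columnOfSymbol_apply (hL : IsLatinSquare L) (s r : Q) :
    hL.columnOfSymbol s r = hL.columnInRow r s := rfl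

theorem exists_rowInterchange_eq (hL : IsLatinSquare L) {s : Q}
    (hs : hL.columnInRow a s ∈ J ↔ hL.columnInRow b s ∈ J) (r : Q) :
    ∃ j, rowInterchange L a b J r j = s := by
  classical
  by_cases hr : hL.columnInRow r s ∈ J
  · have hr' : hL.columnInRow (Equiv.swap a b r) s ∈ J := by
      rw [Equiv.swap_apply_def]
      split_ifs with hra hrb
      · exact hs.1 (hra ▸ hr)
      · exact hs.2 (hrb ▸ hr)
      · exact hr
    exact ⟨_, by rw [rowInterchange, if_pos hr', hL.apply_columnInRow]⟩
  · exact ⟨_, by rw [rowInterchange, if_neg hr, hL.apply_columnInRow]⟩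

theorem surjective_symbolInterchange (hL : IsLatinSquare L) {r : Q}
    (hr : hL.columnInRow r x ∈ K ↔ hL.columnInRow r y ∈ K) :
    Function.Surjective (symbolInterchange L x y K r) := by
  classical
  intro s
  by_cases hs : hL.columnInRow r s ∈ K
  · have hs' : hL.columnInRow r (Equiv.swap x y s) ∈ K := by
      rw [Equiv.swap_apply_def]
      split_ifs with hsx hsy
      · exact hr.1 (hsx ▸ hs)
      · exact hr.2 (hsy ▸ hs)
      · exact hs
    exact ⟨_, by rw [symbolInterchange, if_pos hs', hL.apply_columnInRow, Equiv.swap_apply_self]⟩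
  · exact ⟨_, by rw [symbolInterchange, if_neg hs, hL.apply_columnInRow]⟩

theorem isLatinSquare_rowInterchange [Finite Q] (hL : IsLatinSquare L)
    (hJ : hL.columnInRow a ⁻¹' J = hL.columnInRow b ⁻¹' J) :
    IsLatinSquare (rowInterchange L a b J) :=
  of_surjective_rows (fun r s => hL.exists_rowInterchange_eq (Set.ext_iff.1 hJ s) r)
    fun j => bijective_rowInterchange_column (hL.2 j)

theorem isLatinSquare_symbolInterchange [Finite Q] (hL : IsLatinSquare L)
    (hK : hL.columnOfSymbol x ⁻¹' K = hL.columnOfSymbol y ⁻¹' K) :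
    IsLatinSquare (symbolInterchange L x y K) :=
  of_surjective_rows (fun r => hL.surjective_symbolInterchange (Set.ext_iff.1 hK r))
    fun j => bijective_symbolInterchange_column (hL.2 j)

theorem exists_repeated_rowInterchange (hL : IsLatinSquare L)
    (hJ : IsArc (hL.columnInRow a) (hL.columnInRow b) J x y) {r : Q} (hr : r = a ∨ r = b) :
    ∃ z, (z = x ∨ z = y) ∧ rowInterchange L a b J r (hL.columnInRow a z) = z ∧
      rowInterchange L a b J r (hL.columnInRow b z) = z := by
  obtain ⟨hxy, hyx, hne, -⟩ := hJ
  by_cases hx : hL.columnInRow a x ∈ J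
  · have hy : hL.columnInRow a y ∉ J := hne.1 hx
    rcases hr with rfl | rfl
    · exact ⟨y, .inr rfl, by simp [rowInterchange, hy, hxy.1 hx, apply_columnInRow]⟩
    · exact ⟨x, .inl rfl, by simp [rowInterchange, hx, ← hyx, hy, apply_columnInRow]⟩
  · have hy : hL.columnInRow a y ∈ J := by tauto
    rcases hr with rfl | rfl
    · exact ⟨x, .inl rfl, by simp [rowInterchange, hx, hyx.1 hy, apply_columnInRow]⟩
    · exact ⟨y, .inr rfl, by simp [rowInterchange, hy, ← hxy, hx, apply_columnInRow]⟩

/-- The row interchange leaves one of the rows `a`, `b` with `x` twice and without `y`, and the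
other with `y` twice and without `x`. In each of the two rows, `K` contains exactly one of the two
columns with the repeated symbol, so the symbol interchange repairs both rows. -/
theorem isLatinSquare_symbolInterchange_rowInterchange [Finite Q] (hL : IsLatinSquare L)
    (hJ : IsArc (hL.columnInRow a) (hL.columnInRow b) J x y)
    (hK : IsArc (hL.columnOfSymbol x) (hL.columnOfSymbol y) K a b) :
    IsLatinSquare (symbolInterchange (rowInterchange L a b J) x y K) := by
  classical
  obtain ⟨hKab, hKba, hKne, hKrow⟩ := hK
  simp only [columnOfSymbol_apply] at hKab hKba hKne hKrow
  refine of_surjective_rows (fun r => ?_) fun j =>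
    bijective_symbolInterchange_column (bijective_rowInterchange_column (hL.2 j))
  by_cases hr : r = a ∨ r = b
  · obtain ⟨z, hz, haz, hbz⟩ := hL.exists_repeated_rowInterchange hJ hr
    have hrest : ∀ s, s ≠ x → s ≠ y → ∃ j, rowInterchange L a b J r j = s :=
      fun s hsx hsy => hL.exists_rowInterchange_eq (hJ.2.2.2 s hsx hsy) r
    have hKz : hL.columnInRow a z ∈ K ↔ hL.columnInRow b z ∉ K := by
      rcases hz with rfl | rfl <;> tauto
    by_cases ha : hL.columnInRow a z ∈ K
    · exact surjective_symbolInterchange_of_repeated hz hrest haz hbz ha (hKz.1 ha)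
    · exact surjective_symbolInterchange_of_repeated hz hrest hbz haz (by tauto) ha
  · push Not at hr
    have hrow : symbolInterchange (rowInterchange L a b J) x y K r =
        symbolInterchange L x y K r := by
      funext j
      simp only [symbolInterchange, rowInterchange,
        Equiv.swap_apply_of_ne_of_ne hr.1 hr.2, ite_self]
    rw [hrow]
    exact hL.surjective_symbolInterchange (hKrow r hr.1 hr.2)

end IsLatinSquare

namespace IsDefiningSet

variable {Q : Type*} {L : Q → Q → Q} {C : Set (Q × Q × Q)} {a b x y : Q}

theorem blocks_columnInRow [Finite Q] (hL : IsLatinSquare L) (hC : IsDefiningSet C L)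
    (hab : a ≠ b) :
    Blocks (hL.columnInRow a) (hL.columnInRow b) (rowColumns C a ∪ rowColumns C b) := by
  classical
  intro J hD hJ
  have heq : rowInterchange L a b J = L :=
    hC.2 _ (hL.isLatinSquare_rowInterchange hJ) (containedIn_rowInterchange hC.1 hD)
  refine Set.eq_empty_of_forall_notMem fun j hj => hab ((hL.2 j).injective ?_)
  calc L a j = rowInterchange L a b J a j := by rw [heq]
    _ = L b j := by rw [rowInterchange, if_pos hj, Equiv.swap_apply_left]

theorem blocks_columnOfSymbol [Finite Q] (hL : IsLatinSquare L) (hC : IsDefiningSet C L)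
    (hxy : x ≠ y) :
    Blocks (hL.columnOfSymbol x) (hL.columnOfSymbol y)
      (symbolColumns C x ∪ symbolColumns C y) := by
  classical
  intro K hD hK
  have heq : symbolInterchange L x y K = L :=
    hC.2 _ (hL.isLatinSquare_symbolInterchange hK) (containedIn_symbolInterchange hC.1 hD)
  refine Set.eq_empty_of_forall_notMem fun j hj => hxy ?_
  obtain ⟨r, hr : L r j = x⟩ := (hL.2 j).surjective x
  calc x = symbolInterchange L x y K r j := by rw [heq, hr]
    _ = y := by rw [symbolInterchange, if_pos hj, hr, Equiv.swap_apply_left]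

/-- If both pairs were linked, interchanging first the rows and then the symbols along the two arcs
would give a second Latin square containing `C`. -/
theorem not_linked_columnOfSymbol [Finite Q] (hL : IsLatinSquare L) (hC : IsDefiningSet C L)
    (hba : L b (hL.columnInRow a x) ≠ y) (hab : L a (hL.columnInRow b x) ≠ y)
    (hJ : Linked (hL.columnInRow a) (hL.columnInRow b) (rowColumns C a ∪ rowColumns C b) x y) :
    ¬ Linked (hL.columnOfSymbol x) (hL.columnOfSymbol y)
      (symbolColumns C x ∪ symbolColumns C y) a b := by
  classical
  intro hK
  have hne : a ≠ b := hK.ne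
  obtain ⟨J, hJD, hJ⟩ := hJ
  obtain ⟨K, hKD, hK⟩ := hK
  have heq : symbolInterchange (rowInterchange L a b J) x y K = L :=
    hC.2 _ (hL.isLatinSquare_symbolInterchange_rowInterchange hJ hK)
      (containedIn_symbolInterchange (containedIn_rowInterchange hC.1 hJD) hKD)
  have changed (r r' : Q) (hr : Equiv.swap a b r' = r) (hrr' : r ≠ r')
      (hy : L r' (hL.columnInRow r x) ≠ y) : hL.columnInRow r x ∉ J := by
    intro hrJ
    have hx : L r' (hL.columnInRow r x) ≠ x := fun h =>
      hrr' ((hL.2 _).injective ((hL.apply_columnInRow r x).trans h.symm))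
    have hcell := congrFun₂ heq r' (hL.columnInRow r x)
    rw [symbolInterchange, rowInterchange, if_pos hrJ, hr, hL.apply_columnInRow,
      Equiv.swap_apply_left] at hcell
    split_ifs at hcell
    · exact hy hcell.symm
    · exact hx hcell.symm
  have ha := changed a b (Equiv.swap_apply_right a b) hne hba
  have hb := changed b a (Equiv.swap_apply_left a b) hne.symm hab
  obtain ⟨-, hyx, hxy, -⟩ := hJ
  tauto

theorem exists_linked_symbols [Finite Q] (hL : IsLatinSquare L) (hC : IsDefiningSet C L) {d : ℕ}
    {A X : Finset Q}
    (hA : ∀ a ∈ A, ∀ b ∈ A, (rowColumns C a ∪ rowColumns C b).ncard ≤ d)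
    (hX : d ^ A.offDiag.card * A.card ^ 2 < X.card) :
    ∃ x ∈ X, ∃ y ∈ X, (∀ a ∈ A, ∀ b ∈ A, L b (hL.columnInRow a x) ≠ y) ∧
      ∀ a ∈ A, ∀ b ∈ A, a ≠ b →
        Linked (hL.columnInRow a) (hL.columnInRow b) (rowColumns C a ∪ rowColumns C b) x y := by
  classical
  obtain ⟨Y, hYX, hY, hlink⟩ := Blocks.exists_subset_pairwise_linked_family A.offDiag
    (f := fun p => hL.columnInRow p.1) (g := fun p => hL.columnInRow p.2)
    (D := fun p => rowColumns C p.1 ∪ rowColumns C p.2)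
    (fun p hp => hC.blocks_columnInRow hL (Finset.mem_offDiag.1 hp).2.2)
    (fun p hp => hA _ (Finset.mem_offDiag.1 hp).1 _ (Finset.mem_offDiag.1 hp).2.1) hX
  obtain ⟨x, hx⟩ : Y.Nonempty := Finset.card_pos.1 (by lia)
  obtain ⟨y, hy, hyx⟩ : ∃ y ∈ Y, y ∉ (A ×ˢ A).image fun p => L p.2 (hL.columnInRow p.1 x) := by
    refine Finset.exists_mem_notMem_of_card_lt_card (Finset.card_image_le.trans_lt ?_)
    rwa [Finset.card_product, ← sq]
  have hne : ∀ a ∈ A, ∀ b ∈ A, L b (hL.columnInRow a x) ≠ y := fun a ha b hb h =>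
    hyx (Finset.mem_image.2 ⟨(a, b), Finset.mk_mem_product ha hb, h⟩)
  refine ⟨x, hYX hx, y, hYX hy, hne, fun a ha b hb hab => ?_⟩
  have hxy : x ≠ y := by simpa only [hL.apply_columnInRow] using hne a ha a ha
  exact hlink (a, b) (Finset.mem_offDiag.2 ⟨ha, hb, hab⟩) hx hy hxy

theorem card_le_of_ncard_union_le [Finite Q] (hL : IsLatinSquare L) (hC : IsDefiningSet C L)
    {d : ℕ} {A X : Finset Q} (hd : d < A.card)
    (hA : ∀ a ∈ A, ∀ b ∈ A, (rowColumns C a ∪ rowColumns C b).ncard ≤ d)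
    (hX : ∀ x ∈ X, ∀ y ∈ X, (symbolColumns C x ∪ symbolColumns C y).ncard ≤ d) :
    X.card ≤ d ^ A.offDiag.card * A.card ^ 2 := by
  by_contra! hcard
  obtain ⟨x, hx, y, hy, hne, hrows⟩ := hC.exists_linked_symbols hL hA hcard
  obtain ⟨a₀, ha₀⟩ : A.Nonempty := Finset.card_pos.1 (by lia)
  have hxy : x ≠ y := by simpa only [hL.apply_columnInRow] using hne a₀ ha₀ a₀ ha₀
  obtain ⟨B, hBA, hB, hsymbols⟩ :=
    (hC.blocks_columnOfSymbol hL hxy).exists_subset_pairwise_linked (m := 1) (hX x hx y hy)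
      (by rwa [mul_one])
  obtain ⟨a, ha, b, hb, hab⟩ := Finset.one_lt_card.1 hB
  exact hC.not_linked_columnOfSymbol hL (hne a (hBA ha) b (hBA hb)) (hne b (hBA hb) a (hBA ha))
    (hrows a (hBA ha) b (hBA hb) hab) (hsymbols ha hb hab)

end IsDefiningSet

section Counting

variable {T S Q : Type*} [Fintype Q]

theorem card_lt_card_filter_le_mul_of_sum_lt (w : Q → ℕ) {k : ℕ}
    (h : ∑ q, w q < k * Fintype.card Q) :
    Fintype.card Q < ({q | w q ≤ k} : Finset Q).card * (k + 1) := by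
  have hlarge : ({q | ¬ w q ≤ k} : Finset Q).card * (k + 1) ≤ ∑ q, w q := by
    refine (Finset.card_nsmul_le_sum _ w (k + 1) fun q hq => ?_).trans
      (Finset.sum_le_sum_of_subset (Finset.filter_subset _ _))
    exact Nat.lt_of_not_le (Finset.mem_filter.1 hq).2
  have hpart := Finset.card_filter_add_card_filter_not (s := (Finset.univ : Finset Q))
    (fun q => w q ≤ k)
  rw [Finset.card_univ] at hpart
  nlinarith

theorem sum_ncard_image_fiber_le {s : Set T} (hs : s.Finite) (f : T → Q) (p : T → S) :
    ∑ q, (p '' {t ∈ s | f t = q}).ncard ≤ s.ncard := by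
  classical
  have hfiber (q : Q) :
      (p '' {t ∈ s | f t = q}).ncard ≤ {t ∈ hs.toFinset | f t = q}.card := by
    refine (Set.ncard_image_le (hs.subset (Set.sep_subset _ _))).trans_eq ?_
    rw [← Set.ncard_coe_finset]
    simp
  calc _ ≤ ∑ q, {t ∈ hs.toFinset | f t = q}.card := Finset.sum_le_sum fun q _ => hfiber q
    _ = s.ncard := by
      rw [Set.ncard_eq_toFinset_card s hs, Finset.card_eq_sum_card_fiberwise (f := f)
        (t := Finset.univ) fun _ _ => Finset.mem_coe.2 (Finset.mem_univ _)]

end Counting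

/-- If `C` were smaller, there would be `2 * k + 1` rows, and a proportion `1 / (k + 1)` of all
symbols, with at most `k` entries of `C` each. The bound on the number of these symbols has a factor
`2 * k` for the label at each ordered pair of the rows, and a factor `(2 * k + 1) ^ 2` for the
symbols sharing a column with a fixed one within the rows. -/
theorem IsDefiningSet.mul_card_le_ncard {Q : Type*} [Fintype Q] {L : Q → Q → Q}
    {C : Set (Q × Q × Q)} (hL : IsLatinSquare L) (hC : IsDefiningSet C L) {k : ℕ}
    (hk : (2 * k) ^ ((2 * k + 1) * (2 * k)) * (2 * k + 1) ^ 2 * (k + 1) ≤ Fintype.card Q) :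
    k * Fintype.card Q ≤ C.ncard := by
  by_contra! hlt
  have hkpos : 0 < k := Nat.pos_of_ne_zero fun h => by simp [h] at hlt
  set R : Finset Q := {a | (rowColumns C a).ncard ≤ k}
  set X : Finset Q := {x | (symbolColumns C x).ncard ≤ k}
  have hR : Fintype.card Q < R.card * (k + 1) := card_lt_card_filter_le_mul_of_sum_lt _
    ((sum_ncard_image_fiber_le C.toFinite _ _).trans_lt hlt)
  have hX : Fintype.card Q < X.card * (k + 1) := card_lt_card_filter_le_mul_of_sum_lt _
    ((sum_ncard_image_fiber_le C.toFinite _ _).trans_lt hlt)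
  have hRcard : 2 * k + 1 ≤ R.card := by
    refine Nat.le_of_mul_le_mul_right (LE.le.trans ?_ (hk.trans hR.le)) k.succ_pos
    gcongr
    calc 2 * k + 1 ≤ (2 * k + 1) ^ 2 := Nat.le_self_pow two_ne_zero _
      _ ≤ _ := Nat.le_mul_of_pos_left _ (by positivity)
  obtain ⟨A, hAR, hA⟩ := Finset.exists_subset_card_eq hRcard
  have hbound : X.card ≤ (2 * k) ^ ((2 * k + 1) * (2 * k)) * (2 * k + 1) ^ 2 := by
    have hoffDiag : A.offDiag.card = (2 * k + 1) * (2 * k) := by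
      rw [Finset.offDiag_card, hA, ← Nat.mul_sub_one, Nat.add_sub_cancel]
    rw [← hoffDiag, ← hA]
    refine hC.card_le_of_ncard_union_le hL (by lia) (fun a ha b hb => ?_) fun x hx y hy => ?_
    · have hak := (Finset.mem_filter.1 (hAR ha)).2
      have hbk := (Finset.mem_filter.1 (hAR hb)).2
      exact (Set.ncard_union_le _ _).trans (by lia)
    · have hxk := (Finset.mem_filter.1 hx).2
      have hyk := (Finset.mem_filter.1 hy).2
      exact (Set.ncard_union_le _ _).trans (by lia)
  exact (hX.trans_le (Nat.mul_le_mul_right _ hbound)).not_ge hk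

theorem two_mul_pow_mul_sq_mul_succ_le_two_pow {k : ℕ} (hk : 0 < k) :
    (2 * k) ^ ((2 * k + 1) * (2 * k)) * (2 * k + 1) ^ 2 * (k + 1) ≤ 2 ^ (11 * k ^ 3) := by
  have hdouble : 2 * k ≤ 2 ^ k := by
    rw [← Nat.sub_add_cancel hk, pow_succ, mul_comm]
    exact Nat.mul_le_mul_right 2 Nat.lt_two_pow_self
  have hsq : k ^ 2 ≤ k ^ 3 := Nat.pow_le_pow_right hk (by norm_num)
  have hself : k ≤ k ^ 3 := Nat.le_self_pow (by norm_num) k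
  calc _ ≤ (2 ^ k) ^ ((2 * k + 1) * (2 * k)) * (2 ^ (2 * k)) ^ 2 * 2 ^ k := by
        gcongr <;> exact Nat.lt_two_pow_self
    _ = 2 ^ (4 * k ^ 3 + 2 * k ^ 2 + 5 * k) := by
        simp only [← pow_mul, ← pow_add]
        ring_nf
    _ ≤ 2 ^ (11 * k ^ 3) := Nat.pow_le_pow_right two_pos (by lia)

theorem two_pow_le_of_le_log_rpow {n k : ℕ} (hn : 0 < n)
    (hk : (k : ℝ) ≤ 1 / 2 * Real.log n ^ ((1 : ℝ) / 3)) : 2 ^ (11 * k ^ 3) ≤ n := by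
  have hlog : 8 * (k : ℝ) ^ 3 ≤ Real.log n := by
    have hcube : (Real.log n ^ ((1 : ℝ) / 3)) ^ 3 = Real.log n := by
      rw [← Real.rpow_natCast, ← Real.rpow_mul (Real.log_natCast_nonneg n)]
      norm_num
    calc 8 * (k : ℝ) ^ 3 = (2 * k) ^ 3 := by ring
      _ ≤ (Real.log n ^ ((1 : ℝ) / 3)) ^ 3 := by gcongr; linarith
      _ = Real.log n := hcube
  have hpow : Real.log ((2 : ℝ) ^ (11 * k ^ 3)) ≤ Real.log n := by
    calc Real.log ((2 : ℝ) ^ (11 * k ^ 3)) = 11 * Real.log 2 * (k : ℝ) ^ 3 := by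
          rw [Real.log_pow]
          push_cast
          ring
      _ ≤ 8 * (k : ℝ) ^ 3 := by
          gcongr
          linarith [Real.log_two_lt_d9]
      _ ≤ Real.log n := hlog
  exact_mod_cast (Real.log_le_log_iff (by positivity) (by exact_mod_cast hn)).1 hpow

theorem criticalSet_lower_bound_general {Q : Type*} [Fintype Q] (L : Q → Q → Q)
    (hL : IsLatinSquare L) (C : Set (Q × Q × Q)) (hC : IsDefiningSet C L) :
    Fintype.card Q * ⌊(1 / 2 : ℝ) * Real.log (Fintype.card Q) ^ ((1 : ℝ) / 3)⌋₊ ≤ C.ncard := by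
  set k := ⌊(1 / 2 : ℝ) * Real.log (Fintype.card Q) ^ ((1 : ℝ) / 3)⌋₊
  rcases (Fintype.card Q).eq_zero_or_pos with hQ | hQ
  · simp [hQ]
  rcases k.eq_zero_or_pos with hk | hk
  · simp [hk]
  have hk_le : (k : ℝ) ≤ 1 / 2 * Real.log (Fintype.card Q) ^ ((1 : ℝ) / 3) :=
    Nat.floor_le (mul_nonneg (by norm_num) (Real.rpow_nonneg (Real.log_natCast_nonneg _) _))
  rw [mul_comm]
  refine hC.mul_card_le_ncard hL ?_
  exact (two_mul_pow_mul_sq_mul_succ_le_two_pow hk).trans (two_pow_le_of_le_log_rpow hQ hk_le)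

/-- every critical set `C` of a Latin square of order `n ≥ 1`
satisfies `|C| ≥ n·⌊(1/2)·(log n)^{1/3}⌋`; in particular
`scs(n) ≥ n·⌊(1/2)·(log n)^{1/3}⌋`. -/
theorem criticalSet_lower_bound (n : ℕ) (hn : 0 < n)
    (L : Fin n → Fin n → Fin n) (hL : IsLatinSquare L)
    (C : Set (Fin n × Fin n × Fin n)) (hC : IsCriticalSet C L) :
    n * ⌊(1 / 2 : ℝ) * Real.log n ^ ((1 : ℝ) / 3)⌋₊ ≤ C.ncard := by
  simpa only [Fintype.card_fin] using criticalSet_lower_bound_general L hL C hC.isDefiningSet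
end
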